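/- Let r ∈ (0,1), s > 0, and let Ω ⊆ ℝⁿ be a convex open set. There is a constant C depending only on n, r, s such that for every F ∈ F^s(Ω) and all x, y ∈ Ω: (i) |∇^m (F^r)(x)| ≤ C · ‖F‖_{F^s(Ω)}^{m/s} · F(x)^{r − m/s} for all 0 ≤ m < s; (ii) |∇^{⌊s⌋}(F^r)(x) − ∇^{⌊s⌋}(F^r)(y)| ≤ C · (‖F‖_{Ċ^s(Ω)} + ‖F‖_{Ḟ^s(Ω)}) / min{F(x)^{1−r}, F(y)^{1−r}} · |x−y|^{s−⌊s⌋}, with the conventions 0/0 = 0 and a/0 = ∞; and (iii) if in addition F ≥ ε > 0 on Ω, then ‖F^r‖_{F^s(Ω)} ≤ C · ε^{r−1} · ‖F‖_{F^s(Ω)}. -/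

import Mathlib

open Set ENNReal
open scoped NNReal

noncomputable section

/-- The largest integer strictly less than `s` (for `s > 0`). -/
def lowFloor (s : ℝ) : ℕ := ⌈s⌉₊ - 1

variable {E : Type*} [NormedAddCommGroup E] [NormedSpace ℝ E]

/-- `max_{0 ≤ m < s} sup_{x ∈ Ω} |∇^m F(x)|`, valued in `ℝ≥0∞`. -/
def derivSup (s : ℝ) (Ω : Set E) (F : E → ℝ) : ℝ≥0∞ :=
  ⨆ (m : ℕ) (_ : m ≤ lowFloor s) (x : E) (_ : x ∈ Ω),
    (‖iteratedFDerivWithin ℝ m F Ω x‖₊ : ℝ≥0∞)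

/-- The homogeneous Hölder seminorm `‖F‖_{Ċ^s(Ω)}`, valued in `ℝ≥0∞`. -/
def holderSemi (s : ℝ) (Ω : Set E) (F : E → ℝ) : ℝ≥0∞ :=
  ⨆ (x : E) (_ : x ∈ Ω) (y : E) (_ : y ∈ Ω) (_ : x ≠ y),
    (‖iteratedFDerivWithin ℝ (lowFloor s) F Ω x
        - iteratedFDerivWithin ℝ (lowFloor s) F Ω y‖₊ : ℝ≥0∞)
      / ENNReal.ofReal (‖x - y‖ ^ (s - (lowFloor s : ℝ)))

/-- The Hölder norm `‖F‖_{C^s(Ω)}`, valued in `ℝ≥0∞`. -/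
def csNorm (s : ℝ) (Ω : Set E) (F : E → ℝ) : ℝ≥0∞ :=
  derivSup s Ω F + holderSemi s Ω F

/-- Membership in `C^s(Ω)`. -/
def MemCs (s : ℝ) (Ω : Set E) (F : E → ℝ) : Prop :=
  ContDiffOn ℝ (lowFloor s : ℕ∞) F Ω ∧ csNorm s Ω F ≠ ∞

/-- The flat seminorm `‖F‖_{Ḟ^s(Ω)}`, valued in `ℝ≥0∞`.  (In `ℝ≥0∞` one has
`0/0 = 0` and `a/0 = ∞` for `a ≠ 0`, matching the paper's conventions; for
`0 < s < 1` the supremum is empty, hence `0`.) -/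
def flatSemi (s : ℝ) (Ω : Set E) (F : E → ℝ) : ℝ≥0∞ :=
  ⨆ (m : ℕ) (_ : 1 ≤ m) (_ : m ≤ lowFloor s) (x : E) (_ : x ∈ Ω),
    ((‖iteratedFDerivWithin ℝ m F Ω x‖₊ : ℝ≥0∞) ^ s
      / ENNReal.ofReal (F x) ^ (s - (m : ℝ))) ^ (1 / (m : ℝ))

/-- Membership in the cone `F^s(Ω)`. -/
def MemFs (s : ℝ) (Ω : Set E) (F : E → ℝ) : Prop :=
  MemCs s Ω F ∧ (∀ x ∈ Ω, 0 ≤ F x) ∧ flatSemi s Ω F ≠ ∞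

/-- The norm `‖F‖_{F^s(Ω)} = ‖F‖_{C^s(Ω)} + ‖F‖_{Ḟ^s(Ω)}`. -/
def fsNorm (s : ℝ) (Ω : Set E) (F : E → ℝ) : ℝ≥0∞ :=
  csNorm s Ω F + flatSemi s Ω F

/-- `sup_{x ∈ Ω} |F(x)|`, valued in `ℝ≥0∞`. -/
def supNormSet (Ω : Set E) (F : E → ℝ) : ℝ≥0∞ :=
  ⨆ (x : E) (_ : x ∈ Ω), (‖F x‖₊ : ℝ≥0∞)

/-- `P` is (the function given by) a polynomial of degree at most `D`. -/
def IsPolyDeg (D : ℕ) (P : E → ℝ) : Prop :=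
  ContDiff ℝ (⊤ : ℕ∞) P ∧ ∀ x, iteratedFDeriv ℝ (D + 1) P x = 0

/-- The degree-`D` Taylor polynomial (jet) of `F` at `x`, as a function. -/
def jetAt (D : ℕ) (F : E → ℝ) (x : E) : E → ℝ :=
  fun y => ∑ m ∈ Finset.range (D + 1),
    (iteratedFDeriv ℝ m F x fun _ => y - x) / m.factorial

/-- The degree-`D` Taylor polynomial of `F` at `x` using derivatives within `Ω`. -/
def jetWithinAt (D : ℕ) (F : E → ℝ) (Ω : Set E) (x : E) : E → ℝ :=
  fun y => ∑ m ∈ Finset.range (D + 1),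
    (iteratedFDerivWithin ℝ m F Ω x fun _ => y - x) / m.factorial

/-- The pointwise flatness quantity `max_{1≤m<s} (|∇^m P(x)|^s / P(x)^{s-m})^{1/m}`. -/
def jetFlatAt (s : ℝ) (P : E → ℝ) (x : E) : ℝ≥0∞ :=
  ⨆ (m : ℕ) (_ : 1 ≤ m) (_ : m ≤ lowFloor s),
    ((‖iteratedFDeriv ℝ m P x‖₊ : ℝ≥0∞) ^ s
      / ENNReal.ofReal (P x) ^ (s - (m : ℝ))) ^ (1 / (m : ℝ))

/-- The set `Γ(x₀, M)` of flat nonnegative jets. -/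
def Gamma (s : ℝ) (x₀ : E) (M : ℝ) : Set (E → ℝ) :=
  {P | IsPolyDeg (lowFloor s) P ∧ 0 ≤ P x₀ ∧
    (∀ m ≤ lowFloor s, ‖iteratedFDeriv ℝ m P x₀‖ ≤ M) ∧
    jetFlatAt s P x₀ ≤ ENNReal.ofReal M}

/-- `‖P⃗‖_{J C^s(E)}` for a family of jets `P : E → (E → ℝ)`. -/
def jetCNorm (s : ℝ) (Eset : Set E) (P : E → E → ℝ) : ℝ≥0∞ :=
  (⨆ (x : E) (_ : x ∈ Eset) (m : ℕ) (_ : m ≤ lowFloor s),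
      (‖iteratedFDeriv ℝ m (P x) x‖₊ : ℝ≥0∞))
  + ⨆ (x : E) (_ : x ∈ Eset) (y : E) (_ : y ∈ Eset) (_ : x ≠ y)
      (m : ℕ) (_ : m ≤ lowFloor s),
      (‖iteratedFDeriv ℝ m (P x - P y) y‖₊ : ℝ≥0∞)
        / ENNReal.ofReal (‖x - y‖ ^ (s - (m : ℝ)))

/-- `‖P⃗‖_{J Ḟ^s(E)}` for a family of jets. -/
def jetFlatNorm (s : ℝ) (Eset : Set E) (P : E → E → ℝ) : ℝ≥0∞ :=
  ⨆ (x : E) (_ : x ∈ Eset) (m : ℕ) (_ : 1 ≤ m) (_ : m ≤ lowFloor s),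
    ((‖iteratedFDeriv ℝ m (P x) x‖₊ : ℝ≥0∞) ^ s
      / ENNReal.ofReal |P x x| ^ (s - (m : ℝ))) ^ (1 / (m : ℝ))

/-- `‖P⃗‖_{J F^s(E)}`. -/
def jetFsNorm (s : ℝ) (Eset : Set E) (P : E → E → ℝ) : ℝ≥0∞ :=
  jetCNorm s Eset P + jetFlatNorm s Eset P

/-- The trace norm `‖f‖_{F^s(S)}` (with `inf ∅ = ∞`). -/
def traceNorm (s : ℝ) (S : Set E) (f : E → ℝ) : ℝ≥0∞ :=
  ⨅ (F : E → ℝ) (_ : MemFs s (univ : Set E) F ∧ ∀ x ∈ S, F x = f x),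
    fsNorm s (univ : Set E) F

/-!
Let `A` bound the Hölder and flat seminorms of `F`. The flat condition makes `F ^ (1 / s)` Lipschitz
with constant of order `A ^ (1 / s)`, so `F` stays below a multiple of `μ = F y` at distances up to
`(μ / A) ^ (1 / s)` from `y`. This is the natural length scale of `F` at `y`: each derivative costs
its reciprocal, and every term of Faà di Bruno's formula for `∇ᵐ (F ^ r)` at `y` is at most a
constant times `μ ^ r * (A / μ) ^ (m / s)`. At a zero of `F` the growth bound `F ≤ C * A * d ^ s`
forces the derivatives of `F ^ r` of order less than `r * s` to vanish.

For the Hölder estimate let `F y ≤ F x`. If `x` lies within the length scale of `y`, compare Faà di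
Bruno's formulas at the two points term by term: one factor at a time is replaced by its value at
the other point, gaining the distance measured on that scale. Otherwise the triangle inequality
suffices. When `ε ≤ F`, both estimates turn into bounds for the norm of `F ^ r` through
`F ^ (r - 1) ≤ ε ^ (r - 1)`.
-/

section FaaDiBruno

variable {𝕜 V W G : Type*} [NontriviallyNormedField 𝕜] [NormedAddCommGroup V] [NormedSpace 𝕜 V]
  [NormedAddCommGroup W] [NormedSpace 𝕜 W] [NormedAddCommGroup G] [NormedSpace 𝕜 G] {n : ℕ}

lemma prod_pow_partSize {R : Type*} [CommMonoid R] (c : OrderedFinpartition n) (D : R) :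
    ∏ i, D ^ c.partSize i = D ^ n := by
  simpa using c.prod_sigma_eq_prod (fun _ => D)

lemma norm_compAlongOrderedFinpartition_le_of_weights (c : OrderedFinpartition n)
    {q : W [×c.length]→L[𝕜] G} {p : ∀ i, V [×c.partSize i]→L[𝕜] W} {Q M D : ℝ}
    (hq : ‖q‖ * M ^ c.length ≤ Q) (hp : ∀ i, ‖p i‖ ≤ M * D ^ c.partSize i) (hD : 0 ≤ D) :
    ‖c.compAlongOrderedFinpartition q p‖ ≤ Q * D ^ n :=
  calc ‖c.compAlongOrderedFinpartition q p‖
      ≤ ‖q‖ * ∏ i, ‖p i‖ := c.norm_compAlongOrderedFinpartition_le q p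
    _ ≤ ‖q‖ * ∏ i, (M * D ^ c.partSize i) := by gcongr; exact hp _
    _ = ‖q‖ * M ^ c.length * D ^ n := by
        rw [Finset.prod_mul_distrib, prod_pow_partSize]
        simp [mul_assoc]
    _ ≤ Q * D ^ n := by gcongr

lemma norm_compAlongOrderedFinpartition_sub_right_le (c : OrderedFinpartition n)
    {q : W [×c.length]→L[𝕜] G} {p₁ p₂ : ∀ i, V [×c.partSize i]→L[𝕜] W} {Q M D δ : ℝ}
    (hq : ‖q‖ * M ^ c.length ≤ Q) (hp₁ : ∀ i, ‖p₁ i‖ ≤ M * D ^ c.partSize i)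
    (hp₂ : ∀ i, ‖p₂ i‖ ≤ M * D ^ c.partSize i)
    (hp : ∀ i, ‖p₁ i - p₂ i‖ ≤ M * D ^ c.partSize i * δ) (hD : 0 ≤ D) (hδ : 0 ≤ δ) :
    ‖c.compAlongOrderedFinpartition q p₁ - c.compAlongOrderedFinpartition q p₂‖ ≤
      c.length * (Q * D ^ n * δ) := by
  have hfactor : ∀ i, ∏ j, (if j = i then ‖p₁ i - p₂ i‖ else max ‖p₁ j‖ ‖p₂ j‖) ≤
      M ^ c.length * D ^ n * δ := fun i =>
    calc ∏ j, (if j = i then ‖p₁ i - p₂ i‖ else max ‖p₁ j‖ ‖p₂ j‖)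
        ≤ ∏ j, (M * D ^ c.partSize j) * (if j = i then δ else 1) := by
          refine Finset.prod_le_prod (fun j _ => by split_ifs <;> positivity) fun j _ => ?_
          split_ifs with hij
          · exact hij ▸ hp i
          · exact (max_le (hp₁ j) (hp₂ j)).trans_eq (mul_one _).symm
      _ = M ^ c.length * D ^ n * δ := by
          rw [Finset.prod_mul_distrib, Finset.prod_mul_distrib, prod_pow_partSize]
          simp
  calc ‖c.compAlongOrderedFinpartition q p₁ - c.compAlongOrderedFinpartition q p₂‖
      ≤ ‖q‖ * ∑ i, ∏ j, (if j = i then ‖p₁ i - p₂ i‖ else max ‖p₁ j‖ ‖p₂ j‖) :=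
        (c.compAlongOrderedFinpartitionL 𝕜 V W G
          q).toMultilinearMap.norm_image_sub_le_of_bound' (norm_nonneg q)
          (c.norm_compAlongOrderedFinpartition_le q) p₁ p₂
    _ ≤ ‖q‖ * ∑ _i : Fin c.length, M ^ c.length * D ^ n * δ := by gcongr; exact hfactor _
    _ = c.length * (‖q‖ * M ^ c.length * D ^ n * δ) := by
        rw [Finset.sum_const, Finset.card_univ, Fintype.card_fin, nsmul_eq_mul]
        ring
    _ ≤ c.length * (Q * D ^ n * δ) := by gcongr

variable {q q₁ q₂ : FormalMultilinearSeries 𝕜 W G} {p p₁ p₂ : FormalMultilinearSeries 𝕜 V W}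
  {Q M D δ : ℝ}

lemma norm_taylorComp_le (hq : ∀ l ≤ n, ‖q l‖ * M ^ l ≤ Q) (hp : ∀ j ≤ n, ‖p j‖ ≤ M * D ^ j)
    (hD : 0 ≤ D) :
    ‖q.taylorComp p n‖ ≤ Fintype.card (OrderedFinpartition n) * (Q * D ^ n) := by
  refine (norm_sum_le_of_le _ fun c _ => norm_compAlongOrderedFinpartition_le_of_weights c
    (hq _ c.length_le) (fun i => hp _ (c.partSize_le i)) hD).trans_eq ?_
  rw [Finset.sum_const, Finset.card_univ, nsmul_eq_mul]

lemma norm_taylorComp_sub_le (hq₁ : ∀ l ≤ n, ‖q₁ l‖ * M ^ l ≤ Q)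
    (hq : ∀ l ≤ n, ‖q₁ l - q₂ l‖ * M ^ l ≤ Q * δ) (hp₁ : ∀ j ≤ n, ‖p₁ j‖ ≤ M * D ^ j)
    (hp₂ : ∀ j ≤ n, ‖p₂ j‖ ≤ M * D ^ j) (hp : ∀ j ≤ n, ‖p₁ j - p₂ j‖ ≤ M * D ^ j * δ)
    (hD : 0 ≤ D) (hδ : 0 ≤ δ) :
    ‖q₁.taylorComp p₁ n - q₂.taylorComp p₂ n‖ ≤
      Fintype.card (OrderedFinpartition n) * ((n + 1) * (Q * D ^ n * δ)) := by
  have hQ : 0 ≤ Q := (norm_nonneg (q₁ 0)).trans (by simpa using hq₁ 0 n.zero_le)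
  have hterm : ∀ c : OrderedFinpartition n, ‖q₁.compAlongOrderedFinpartition p₁ c -
      q₂.compAlongOrderedFinpartition p₂ c‖ ≤ (n + 1) * (Q * D ^ n * δ) := fun c =>
    calc ‖q₁.compAlongOrderedFinpartition p₁ c - q₂.compAlongOrderedFinpartition p₂ c‖
        ≤ c.length * (Q * D ^ n * δ) + Q * δ * D ^ n :=
          (norm_sub_le_norm_sub_add_norm_sub _ (q₁.compAlongOrderedFinpartition p₂ c) _).trans
            (add_le_add
              (norm_compAlongOrderedFinpartition_sub_right_le c (hq₁ _ c.length_le)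
                (fun i => hp₁ _ (c.partSize_le i)) (fun i => hp₂ _ (c.partSize_le i))
                (fun i => hp _ (c.partSize_le i)) hD hδ)
              (norm_compAlongOrderedFinpartition_le_of_weights c (q := q₁ c.length - q₂ c.length)
                (hq _ c.length_le) (fun i => hp₂ _ (c.partSize_le i)) hD))
      _ = (c.length + 1) * (Q * D ^ n * δ) := by ring
      _ ≤ (n + 1) * (Q * D ^ n * δ) := by
          gcongr
          exact c.length_le
  rw [FormalMultilinearSeries.taylorComp, FormalMultilinearSeries.taylorComp,
    ← Finset.sum_sub_distrib]
  refine (norm_sum_le_of_le _ fun c _ => hterm c).trans_eq ?_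
  rw [Finset.sum_const, Finset.card_univ, nsmul_eq_mul]

end FaaDiBruno

section RealPower

lemma norm_iteratedFDeriv_rpow (r : ℝ) (l : ℕ) {a : ℝ} (ha : 0 < a) :
    ‖iteratedFDeriv ℝ l (fun t : ℝ => t ^ r) a‖ = |(descPochhammer ℝ l).eval r| * a ^ (r - l) := by
  rw [norm_iteratedFDeriv_eq_norm_iteratedDeriv, iteratedDeriv_eq_iterate,
    Real.iter_deriv_rpow_const, norm_mul, Real.norm_of_nonneg (Real.rpow_nonneg ha.le _),
    Real.norm_eq_abs]

lemma norm_iteratedFDeriv_rpow_sub_le {r : ℝ} {l : ℕ} (hr : r ≤ l + 1) {a b μ : ℝ} (hμ : 0 < μ)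
    (ha : μ ≤ a) (hb : μ ≤ b) :
    ‖iteratedFDeriv ℝ l (fun t : ℝ => t ^ r) a - iteratedFDeriv ℝ l (fun t : ℝ => t ^ r) b‖ ≤
      |(descPochhammer ℝ (l + 1)).eval r| * μ ^ (r - l - 1) * |a - b| := by
  refine (convex_Ici μ).norm_image_sub_le_of_norm_hasFDerivWithin_le (x := b) (y := a)
    (fun t ht => ((Real.contDiffAt_rpow_const_of_ne (n := (l + 1 : ℕ))
      (hμ.trans_le ht).ne').differentiableAt_iteratedFDeriv
        (by exact_mod_cast l.lt_succ_self)).hasFDerivAt.hasFDerivWithinAt) (fun t ht => ?_) hb ha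
  rw [norm_fderiv_iteratedFDeriv, norm_iteratedFDeriv_rpow r _ (hμ.trans_le ht), Nat.cast_add_one,
    ← sub_sub]
  gcongr ?_ * ?_
  exact Real.rpow_le_rpow_of_nonpos hμ ht (by linarith)

lemma iteratedFDerivWithin_rpow_eq_taylorComp {Ω : Set E} (hΩ : UniqueDiffOn ℝ Ω) {F : E → ℝ}
    {k : ℕ} (hF : ContDiffOn ℝ k F Ω) (r : ℝ) {m : ℕ} (hm : m ≤ k) {x : E} (hx : x ∈ Ω)
    (hFx : 0 < F x) :
    iteratedFDerivWithin ℝ m (fun z => F z ^ r) Ω x =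
      (ftaylorSeries ℝ (fun t : ℝ => t ^ r) (F x)).taylorComp (ftaylorSeriesWithin ℝ F Ω x) m := by
  rw [← ftaylorSeriesWithin_univ]
  exact iteratedFDerivWithin_comp_of_eventually_mem (g := fun t : ℝ => t ^ r) (t := univ)
    (Real.contDiffAt_rpow_const_of_ne hFx.ne').contDiffWithinAt (hF x hx) uniqueDiffOn_univ hΩ hx
    (Filter.Eventually.of_forall fun _ => mem_univ _) (by exact_mod_cast hm)

/-- A bound for the coefficients `r (r - 1) ⋯ (r - l + 1)` of the derivatives of `t ↦ t ^ r` of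
order `l ≤ k + 1`: differences of derivatives of order `k` cost one derivative more. -/
def rpowCoeff (r : ℝ) (k : ℕ) : ℝ :=
  ∑ l ∈ Finset.range (k + 2), |(descPochhammer ℝ l).eval r|

/-- A common bound for the number of terms of Faà di Bruno's formula for `F ^ r`, counted with the
size of their coefficients, up to order `k`. -/
def rpowConst (r : ℝ) (k : ℕ) : ℝ :=
  (∑ m ∈ Finset.range (k + 1), (Fintype.card (OrderedFinpartition m) : ℝ)) * rpowCoeff r k

lemma abs_descPochhammer_eval_le_rpowCoeff (r : ℝ) {l k : ℕ} (hl : l ≤ k + 1) :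
    |(descPochhammer ℝ l).eval r| ≤ rpowCoeff r k :=
  Finset.single_le_sum (f := fun l => |(descPochhammer ℝ l).eval r|)
    (fun _ _ => abs_nonneg _) (Finset.mem_range.2 (by lia))

lemma one_le_rpowCoeff (r : ℝ) (k : ℕ) : 1 ≤ rpowCoeff r k := by
  simpa using abs_descPochhammer_eval_le_rpowCoeff r (k + 1).zero_le

lemma card_mul_rpowCoeff_le_rpowConst (r : ℝ) {m k : ℕ} (hm : m ≤ k) :
    Fintype.card (OrderedFinpartition m) * rpowCoeff r k ≤ rpowConst r k := by
  have := one_le_rpowCoeff r k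
  unfold rpowConst
  gcongr
  exact Finset.single_le_sum (f := fun m => (Fintype.card (OrderedFinpartition m) : ℝ))
    (fun _ _ => by positivity) (Finset.mem_range.2 (by lia))

lemma one_le_rpowConst (r : ℝ) (k : ℕ) : 1 ≤ rpowConst r k := by
  have h := card_mul_rpowCoeff_le_rpowConst r k.zero_le
  rw [Fintype.card_unique, Nat.cast_one, one_mul] at h
  exact (one_le_rpowCoeff r k).trans h

lemma norm_iteratedFDeriv_rpow_mul_pow_le (r : ℝ) {l k : ℕ} (hl : l ≤ k + 1) {a : ℝ} (ha : 0 < a) :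
    ‖iteratedFDeriv ℝ l (fun t : ℝ => t ^ r) a‖ * a ^ l ≤ rpowCoeff r k * a ^ r := by
  rw [norm_iteratedFDeriv_rpow r l ha, mul_assoc, ← Real.rpow_natCast, ← Real.rpow_add ha,
    sub_add_cancel]
  gcongr
  exact abs_descPochhammer_eval_le_rpowCoeff r hl

lemma norm_iteratedFDeriv_rpow_sub_mul_pow_le {r : ℝ} (hr : r ≤ 1) {l k : ℕ} (hl : l ≤ k)
    {a b μ : ℝ} (hμ : 0 < μ) (ha : μ ≤ a) (hb : μ ≤ b) :
    ‖iteratedFDeriv ℝ l (fun t : ℝ => t ^ r) a - iteratedFDeriv ℝ l (fun t : ℝ => t ^ r) b‖ *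
        μ ^ l ≤ rpowCoeff r k * μ ^ (r - 1) * |a - b| := by
  have hrl : r ≤ l + 1 := by linarith [(Nat.cast_nonneg l : (0 : ℝ) ≤ l)]
  calc _ ≤ |(descPochhammer ℝ (l + 1)).eval r| * μ ^ (r - l - 1) * |a - b| * μ ^ l := by
        gcongr
        exact norm_iteratedFDeriv_rpow_sub_le hrl hμ ha hb
    _ = |(descPochhammer ℝ (l + 1)).eval r| * μ ^ (r - 1) * |a - b| := by
        rw [sub_right_comm, Real.rpow_sub_natCast hμ.ne']
        field_simp
    _ ≤ rpowCoeff r k * μ ^ (r - 1) * |a - b| := by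
        gcongr
        exact abs_descPochhammer_eval_le_rpowCoeff r (by lia)

lemma norm_iteratedFDeriv_rpow_mul_mul_pow_le (r : ℝ) {l k : ℕ} (hl : l ≤ k + 1) {a K : ℝ}
    (ha : 0 < a) (hK : 1 ≤ K) :
    ‖iteratedFDeriv ℝ l (fun t : ℝ => t ^ r) a‖ * (K * a) ^ l ≤
      rpowCoeff r k * K ^ (k + 1) * a ^ r :=
  calc _ = K ^ l * (‖iteratedFDeriv ℝ l (fun t : ℝ => t ^ r) a‖ * a ^ l) := by
        rw [mul_pow]
        ring
    _ ≤ K ^ (k + 1) * (rpowCoeff r k * a ^ r) := by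
        gcongr ?_ * ?_
        · exact pow_le_pow_right₀ hK hl
        · exact norm_iteratedFDeriv_rpow_mul_pow_le r hl ha
    _ = _ := by ring

lemma norm_iteratedFDeriv_rpow_sub_mul_mul_pow_le {r : ℝ} (hr : r ≤ 1) {l k : ℕ} (hl : l ≤ k)
    {a b K δ : ℝ} (ha : 0 < a) (hab : a ≤ b) (hK : 1 ≤ K) (hδ : |a - b| ≤ K * a * δ) :
    ‖iteratedFDeriv ℝ l (fun t : ℝ => t ^ r) a - iteratedFDeriv ℝ l (fun t : ℝ => t ^ r) b‖ *
        (K * a) ^ l ≤ rpowCoeff r k * K ^ (k + 1) * a ^ r * δ := by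
  have hc := one_le_rpowCoeff r k
  calc _ = K ^ l * (‖iteratedFDeriv ℝ l (fun t : ℝ => t ^ r) a -
        iteratedFDeriv ℝ l (fun t : ℝ => t ^ r) b‖ * a ^ l) := by
        rw [mul_pow]
        ring
    _ ≤ K ^ k * (rpowCoeff r k * a ^ (r - 1) * (K * a * δ)) := by
        gcongr ?_ * ?_
        · exact pow_le_pow_right₀ hK hl
        · exact (norm_iteratedFDeriv_rpow_sub_mul_pow_le hr hl ha le_rfl hab).trans (by gcongr)
    _ = _ := by
        rw [Real.rpow_sub_one ha.ne', pow_succ]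
        field_simp

end RealPower

section Scale

lemma lowFloor_lt {s : ℝ} (hs : 0 < s) : (lowFloor s : ℝ) < s := by
  have hceil : 0 < ⌈s⌉₊ := Nat.ceil_pos.2 hs
  exact Nat.lt_ceil.1 (by unfold lowFloor; lia)

lemma cast_lt_of_le_lowFloor {s : ℝ} (hs : 0 < s) {m : ℕ} (hm : m ≤ lowFloor s) : (m : ℝ) < s :=
  (Nat.cast_le.2 hm).trans_lt (lowFloor_lt hs)

lemma le_lowFloor_add_one (s : ℝ) : s ≤ lowFloor s + 1 := by
  refine (Nat.le_ceil s).trans ?_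
  exact_mod_cast (by unfold lowFloor; lia : ⌈s⌉₊ ≤ lowFloor s + 1)

/-- The reciprocal of the length scale on which a function whose flat and Hölder seminorms of order
`s` are at most `A` stays comparable to its value `μ > 0`. -/
def invScale (s A μ : ℝ) : ℝ := (A / μ) ^ (1 / s)

variable {s A μ : ℝ}

lemma invScale_nonneg (hA : 0 ≤ A) (hμ : 0 ≤ μ) : 0 ≤ invScale s A μ :=
  Real.rpow_nonneg (div_nonneg hA hμ) _

lemma invScale_rpow (hs : s ≠ 0) (hA : 0 ≤ A) (hμ : 0 ≤ μ) : invScale s A μ ^ s = A / μ := by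
  rw [invScale, one_div, Real.rpow_inv_rpow (div_nonneg hA hμ) hs]

lemma rpow_mul_rpow_sub_eq_invScale_pow (hA : 0 ≤ A) (hμ : 0 < μ) (p : ℝ) (m : ℕ) :
    A ^ ((m : ℝ) / s) * μ ^ (p - m / s) = μ ^ p * invScale s A μ ^ m := by
  rw [invScale, ← Real.rpow_natCast, ← Real.rpow_mul (div_nonneg hA hμ.le), one_div_mul_eq_div,
    Real.div_rpow hA hμ.le, Real.rpow_sub hμ]
  ring

lemma rpow_mul_invScale_pow_mul_rpow (hs : s ≠ 0) (hA : 0 ≤ A) (hμ : 0 < μ) {m : ℕ}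
    (hm : (m : ℝ) ≤ s) (p : ℝ) {d : ℝ} (hd : 0 ≤ d) :
    μ ^ p * invScale s A μ ^ m * (invScale s A μ * d) ^ (s - m) =
      A * μ ^ (p - 1) * d ^ (s - m) := by
  have hD : 0 ≤ invScale s A μ := invScale_nonneg hA hμ.le
  have hDs : invScale s A μ ^ m * invScale s A μ ^ (s - m) = A / μ := by
    rw [← Real.rpow_natCast, ← Real.rpow_add_of_nonneg hD m.cast_nonneg (sub_nonneg.2 hm),
      add_sub_cancel, invScale_rpow hs hA hμ.le]
  rw [Real.mul_rpow hD hd, Real.rpow_sub_one hμ.ne']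
  linear_combination μ ^ p * d ^ (s - m) * hDs

lemma invScale_mul_le_one (hs : 0 < s) (hA : 0 ≤ A) (hμ : 0 < μ) {d : ℝ} (hd : 0 ≤ d)
    (h : A * d ^ s ≤ μ) : invScale s A μ * d ≤ 1 := by
  have hD : 0 ≤ invScale s A μ := invScale_nonneg hA hμ.le
  rw [← Real.rpow_le_rpow_iff (mul_nonneg hD hd) zero_le_one hs, Real.one_rpow,
    Real.mul_rpow hD hd, invScale_rpow hs.ne' hA hμ.le, div_mul_eq_mul_div, div_le_one hμ]
  exact h

lemma rpow_mul_rpow_le_of_le_mul (hs : 0 < s) (hA : 0 ≤ A) {d : ℝ} (hd : 0 ≤ d) {m : ℕ}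
    (hm : (m : ℝ) ≤ s) {K t : ℝ} (hK : 1 ≤ K) (ht : 0 ≤ t) (htK : t ≤ K * (A * d ^ s)) :
    A ^ ((m : ℝ) / s) * t ^ (1 - m / s) ≤ K * (A * d ^ (s - m)) := by
  have hm₀ : 0 ≤ (m : ℝ) / s := by positivity
  have hm₁ : 0 ≤ 1 - (m : ℝ) / s := sub_nonneg.2 ((div_le_one hs).2 hm)
  calc A ^ ((m : ℝ) / s) * t ^ (1 - m / s)
      ≤ A ^ ((m : ℝ) / s) * (K * (A * d ^ s)) ^ (1 - m / s) := by gcongr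
    _ = K ^ (1 - m / s) * (A ^ ((m : ℝ) / s) * A ^ (1 - m / s) * (d ^ s) ^ (1 - m / s)) := by
        rw [Real.mul_rpow (by positivity) (by positivity), Real.mul_rpow hA (by positivity)]
        ring
    _ = K ^ (1 - m / s) * (A * d ^ (s - m)) := by
        rw [← Real.rpow_add_of_nonneg hA hm₀ hm₁, ← Real.rpow_mul hd, add_sub_cancel,
          Real.rpow_one, mul_sub, mul_one, mul_div_cancel₀ _ hs.ne']
    _ ≤ K * (A * d ^ (s - m)) := by
        gcongr
        exact Real.rpow_le_self_of_one_le hK (by linarith)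

end Scale

section Constants

/-- The constant in the Hölder estimate for the derivatives of `F ^ r` of order `⌊s⌋`. The number
`2 ^ (s + 1)` bounds the oscillation of `F` on its own scale. -/
def holderConst (r s : ℝ) : ℝ :=
  2 * rpowConst r (lowFloor s) * ((lowFloor s + 1) * (2 ^ (s + 1)) ^ (lowFloor s + 1))

lemma two_mul_rpowConst_le_holderConst (r : ℝ) {s : ℝ} (hs : 0 < s) :
    2 * rpowConst r (lowFloor s) ≤ holderConst r s := by
  have hC := one_le_rpowConst r (lowFloor s)
  have hK : (1 : ℝ) ≤ 2 ^ (s + 1) := Real.one_le_rpow one_le_two (by linarith)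
  exact le_mul_of_one_le_right (by positivity)
    (one_le_mul_of_one_le_of_one_le (by simp) (one_le_pow₀ hK))

lemma holderConst_pos (r s : ℝ) : 0 < holderConst r s := by
  have hC := one_le_rpowConst r (lowFloor s)
  unfold holderConst
  positivity

/-- A constant for which `rpowFlatConst r s * ε ^ (r - 1) * A` bounds the seminorms of `F ^ r` when
those of `F ≥ ε` are at most `A`. The flat seminorm involves `s`-th powers of derivatives, hence
the exponent. -/
def rpowFlatConst (r s : ℝ) : ℝ := rpowConst r (lowFloor s) ^ s + holderConst r s

lemma rpowConst_rpow_le_rpowFlatConst (r s : ℝ) :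
    rpowConst r (lowFloor s) ^ s ≤ rpowFlatConst r s :=
  le_add_of_nonneg_right (holderConst_pos r s).le

lemma holderConst_le_rpowFlatConst (r s : ℝ) : holderConst r s ≤ rpowFlatConst r s :=
  le_add_of_nonneg_left (Real.rpow_nonneg (zero_le_one.trans (one_le_rpowConst _ _)) s)

lemma rpowConst_le_rpowFlatConst (r : ℝ) {s : ℝ} (hs : 0 < s) :
    rpowConst r (lowFloor s) ≤ rpowFlatConst r s := by
  linarith [one_le_rpowConst r (lowFloor s), two_mul_rpowConst_le_holderConst r hs,
    holderConst_le_rpowFlatConst r s]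

lemma rpowFlatConst_nonneg (r s : ℝ) : 0 ≤ rpowFlatConst r s :=
  (holderConst_pos r s).le.trans (holderConst_le_rpowFlatConst r s)

end Constants

lemma hasFDerivAt_zero_of_norm_sub_le_rpow {V W : Type*} [NormedAddCommGroup V]
    [NormedSpace ℝ V] [NormedAddCommGroup W] [NormedSpace ℝ W] {f : V → W} {x : V} {K q : ℝ}
    (hq : 1 < q) (hf : ∀ᶠ z in nhds x, ‖f z - f x‖ ≤ K * ‖z - x‖ ^ q) :
    HasFDerivAt f (0 : V →L[ℝ] W) x := by
  have hq₀ : 0 < q - 1 := sub_pos.2 hq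
  have hcont : Continuous fun z => ‖z - x‖ ^ (q - 1) :=
    (continuous_id.sub continuous_const).norm.rpow_const fun _ => Or.inr hq₀.le
  have hlim : Filter.Tendsto (fun z => ‖z - x‖ ^ (q - 1)) (nhds x) (nhds 0) := by
    simpa [Real.zero_rpow hq₀.ne'] using hcont.tendsto x
  have hsmall : (fun z => ‖z - x‖ ^ q) =o[nhds x] fun z => z - x := by
    have hmul := ((Asymptotics.isLittleO_one_iff ℝ).2 hlim).mul_isBigO
      (Asymptotics.isBigO_refl (fun z => ‖z - x‖) (nhds x))
    refine (hmul.congr (fun z => ?_) fun z => one_mul _).of_norm_right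
    rw [← Real.rpow_add_one' (norm_nonneg _) (by linarith), sub_add_cancel]
  refine .of_isLittleO ?_
  simpa using (Asymptotics.IsBigO.of_bound K (hf.mono fun z hz =>
    hz.trans_eq (by rw [Real.norm_of_nonneg (by positivity)]))).trans_isLittleO hsmall

/-- `F` is a nonnegative function of class `C^⌊s⌋` on `Ω` whose flat and Hölder seminorms of order
`s` are at most `A`. The flat bound is solved for `‖∇^m F‖`, so that it makes sense at zeros of
`F`. -/
structure IsFlatWith (s A : ℝ) (Ω : Set E) (F : E → ℝ) : Prop where
  bound_nonneg : 0 ≤ A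
  nonneg : ∀ x ∈ Ω, 0 ≤ F x
  contDiffOn : ContDiffOn ℝ (lowFloor s) F Ω
  norm_le : ∀ m ≤ lowFloor s, ∀ x ∈ Ω,
    ‖iteratedFDerivWithin ℝ m F Ω x‖ ≤ A ^ ((m : ℝ) / s) * F x ^ (1 - (m : ℝ) / s)
  norm_sub_le : ∀ x ∈ Ω, ∀ y ∈ Ω,
    ‖iteratedFDerivWithin ℝ (lowFloor s) F Ω x - iteratedFDerivWithin ℝ (lowFloor s) F Ω y‖ ≤
      A * ‖x - y‖ ^ (s - (lowFloor s : ℝ))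

lemma norm_iteratedFDerivWithin_zero_sub (F : E → ℝ) (Ω : Set E) (x y : E) :
    ‖iteratedFDerivWithin ℝ 0 F Ω x - iteratedFDerivWithin ℝ 0 F Ω y‖ = |F x - F y| := by
  rw [iteratedFDerivWithin_zero_eq_comp]
  simp only [Function.comp_apply, ← map_sub, LinearIsometryEquiv.norm_map, Real.norm_eq_abs]

namespace IsFlatWith

variable {r s A : ℝ} {Ω : Set E} {F : E → ℝ} {x y : E}

section Growth

lemma norm_fderivWithin_le (h : IsFlatWith s A Ω F) (hΩ : IsOpen Ω) (hk : 1 ≤ lowFloor s)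
    (hx : x ∈ Ω) : ‖fderivWithin ℝ F Ω x‖ ≤ A ^ (1 / s) * F x ^ (1 - 1 / s) := by
  simpa [norm_iteratedFDerivWithin_one F (hΩ.uniqueDiffWithinAt hx)] using h.norm_le 1 hk x hx

lemma abs_add_rpow_one_div_sub_le (h : IsFlatWith s A Ω F) (hconv : Convex ℝ Ω) (hΩ : IsOpen Ω)
    (hs : 1 ≤ s) (hk : 1 ≤ lowFloor s) {δ : ℝ} (hδ : 0 < δ) (hx : x ∈ Ω) (hy : y ∈ Ω) :
    |(F x + δ) ^ (1 / s) - (F y + δ) ^ (1 / s)| ≤ A ^ (1 / s) * ‖x - y‖ := by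
  have hs' : 1 / s ≤ 1 := div_le_one_of_le₀ hs (by positivity)
  have hpos : ∀ z ∈ Ω, 0 < F z + δ := fun z hz => by have := h.nonneg z hz; positivity
  have hdiff : DifferentiableOn ℝ F Ω :=
    h.contDiffOn.differentiableOn (by exact_mod_cast Nat.one_le_iff_ne_zero.1 hk)
  refine hconv.norm_image_sub_le_of_norm_hasFDerivWithin_le (fun z hz =>
    (((hdiff z hz).hasFDerivWithinAt).add_const δ).rpow_const (Or.inl (hpos z hz).ne'))
    (fun z hz => ?_) hy hx
  have hA := h.bound_nonneg
  have hz₀ := hpos z hz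
  have hFz := h.nonneg z hz
  rw [norm_smul, Real.norm_of_nonneg (by positivity)]
  calc 1 / s * (F z + δ) ^ (1 / s - 1) * ‖fderivWithin ℝ F Ω z‖
      ≤ 1 * (F z + δ) ^ (1 / s - 1) * (A ^ (1 / s) * (F z + δ) ^ (1 - 1 / s)) := by
        gcongr
        refine (h.norm_fderivWithin_le hΩ hk hz).trans ?_
        gcongr
        linarith
    _ = A ^ (1 / s) * ((F z + δ) ^ (1 / s - 1) * (F z + δ) ^ (1 - 1 / s)) := by ring
    _ = A ^ (1 / s) := by rw [← Real.rpow_add hz₀]; simp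

lemma abs_rpow_one_div_sub_le (h : IsFlatWith s A Ω F) (hconv : Convex ℝ Ω) (hΩ : IsOpen Ω)
    (hs : 1 ≤ s) (hk : 1 ≤ lowFloor s) (hx : x ∈ Ω) (hy : y ∈ Ω) :
    |F x ^ (1 / s) - F y ^ (1 / s)| ≤ A ^ (1 / s) * ‖x - y‖ := by
  have hcont : Continuous fun δ : ℝ => |(F x + δ) ^ (1 / s) - (F y + δ) ^ (1 / s)| := by
    have hpow : ∀ a : ℝ, Continuous fun δ : ℝ => (a + δ) ^ (1 / s) := fun a =>
      (continuous_const.add continuous_id).rpow_const fun _ => Or.inr (by positivity)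
    exact ((hpow _).sub (hpow _)).abs
  have hlim := (hcont.tendsto 0).mono_left (nhdsWithin_le_nhds (s := Ioi 0))
  simp only [add_zero] at hlim
  exact le_of_tendsto hlim (Filter.eventually_of_mem self_mem_nhdsWithin fun δ hδ =>
    h.abs_add_rpow_one_div_sub_le hconv hΩ hs hk hδ hx hy)

lemma growth (h : IsFlatWith s A Ω F) (hconv : Convex ℝ Ω) (hΩ : IsOpen Ω) (hs : 0 < s)
    (hx : x ∈ Ω) (hy : y ∈ Ω) : F x ≤ 2 ^ s * (F y + A * ‖x - y‖ ^ s) := by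
  have hA := h.bound_nonneg
  have hFx := h.nonneg x hx
  have hFy := h.nonneg y hy
  rcases Nat.eq_zero_or_pos (lowFloor s) with hk | hk
  · have hsub := h.norm_sub_le x hx y hy
    rw [hk, norm_iteratedFDerivWithin_zero_sub, Nat.cast_zero, sub_zero] at hsub
    have hle : F x ≤ F y + A * ‖x - y‖ ^ s := by linarith [le_abs_self (F x - F y)]
    exact hle.trans (le_mul_of_one_le_left (by positivity) (Real.one_le_rpow one_le_two hs.le))
  · have hs1 : 1 ≤ s := (by exact_mod_cast hk : (1 : ℝ) ≤ lowFloor s).trans (lowFloor_lt hs).le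
    have hroot : F x ^ (1 / s) ≤ F y ^ (1 / s) + A ^ (1 / s) * ‖x - y‖ := by
      linarith [(le_abs_self _).trans (h.abs_rpow_one_div_sub_le hconv hΩ hs1 hk hx hy)]
    have hpow : ∀ {a : ℝ}, 0 ≤ a → (a ^ (1 / s)) ^ s = a := fun ha => by
      rw [one_div, Real.rpow_inv_rpow ha hs.ne']
    calc F x = (F x ^ (1 / s)) ^ s := (hpow hFx).symm
      _ ≤ (F y ^ (1 / s) + A ^ (1 / s) * ‖x - y‖) ^ s := by gcongr
      _ ≤ 2 ^ (s - 1) * ((F y ^ (1 / s)) ^ s + (A ^ (1 / s) * ‖x - y‖) ^ s) :=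
          NNReal.coe_le_coe.2 (NNReal.rpow_add_le_mul_rpow_add_rpow ⟨F y ^ (1 / s), by positivity⟩
            ⟨A ^ (1 / s) * ‖x - y‖, by positivity⟩ hs1)
      _ = 2 ^ (s - 1) * (F y + A * ‖x - y‖ ^ s) := by
          rw [Real.mul_rpow (by positivity) (norm_nonneg _), hpow hFy, hpow hA]
      _ ≤ 2 ^ s * (F y + A * ‖x - y‖ ^ s) := by
          gcongr
          exacts [one_le_two, by linarith]

lemma le_two_rpow_mul (h : IsFlatWith s A Ω F) (hconv : Convex ℝ Ω) (hΩ : IsOpen Ω) (hs : 0 < s)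
    (hx : x ∈ Ω) (hy : y ∈ Ω) {t : ℝ} (hFy : F y ≤ t) (hxy : A * ‖x - y‖ ^ s ≤ t) :
    F x ≤ 2 ^ (s + 1) * t :=
  calc F x ≤ 2 ^ s * (F y + A * ‖x - y‖ ^ s) := h.growth hconv hΩ hs hx hy
    _ ≤ 2 ^ s * (t + t) := by gcongr
    _ = 2 ^ (s + 1) * t := by rw [Real.rpow_add_one two_ne_zero]; ring

lemma eq_zero (h : IsFlatWith s 0 Ω F) (hconv : Convex ℝ Ω) (hΩ : IsOpen Ω) (hs : 0 < s)
    (hx : x ∈ Ω) (hy : y ∈ Ω) (hFy : F y = 0) : F x = 0 :=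
  le_antisymm (by simpa [hFy] using h.growth hconv hΩ hs hx hy) (h.nonneg x hx)

end Growth

section Pointwise

lemma norm_iteratedFDerivWithin_le_of_le_mul (h : IsFlatWith s A Ω F) (hs : 0 < s) (hx : x ∈ Ω)
    {K μ : ℝ} (hμ : 0 < μ) (hK : 1 ≤ K) (hFx : F x ≤ K * μ) {j : ℕ} (hj : j ≤ lowFloor s) :
    ‖iteratedFDerivWithin ℝ j F Ω x‖ ≤ K * μ * invScale s A μ ^ j := by
  have hA := h.bound_nonneg
  have hj₀ : 0 ≤ (j : ℝ) / s := by positivity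
  have hj₁ : (j : ℝ) / s ≤ 1 := ((div_lt_one hs).2 (cast_lt_of_le_lowFloor hs hj)).le
  have hpow : F x ^ (1 - (j : ℝ) / s) ≤ K * μ ^ (1 - (j : ℝ) / s) :=
    calc F x ^ (1 - (j : ℝ) / s) ≤ (K * μ) ^ (1 - (j : ℝ) / s) :=
          Real.rpow_le_rpow (h.nonneg x hx) hFx (by linarith)
      _ = K ^ (1 - (j : ℝ) / s) * μ ^ (1 - (j : ℝ) / s) :=
          Real.mul_rpow (by positivity) hμ.le
      _ ≤ K * μ ^ (1 - (j : ℝ) / s) := by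
          gcongr
          exact Real.rpow_le_self_of_one_le hK (by linarith)
  calc ‖iteratedFDerivWithin ℝ j F Ω x‖ ≤ A ^ ((j : ℝ) / s) * F x ^ (1 - (j : ℝ) / s) :=
        h.norm_le j hj x hx
    _ ≤ A ^ ((j : ℝ) / s) * (K * μ ^ (1 - (j : ℝ) / s)) := by gcongr
    _ = K * (A ^ ((j : ℝ) / s) * μ ^ (1 - (j : ℝ) / s)) := by ring
    _ = K * μ * invScale s A μ ^ j := by
        rw [rpow_mul_rpow_sub_eq_invScale_pow hA hμ, Real.rpow_one, mul_assoc]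

lemma norm_iteratedFDerivWithin_rpow_le_of_pos (h : IsFlatWith s A Ω F) (hΩ : IsOpen Ω)
    (hs : 0 < s) (r : ℝ) {m : ℕ} (hm : m ≤ lowFloor s) (hx : x ∈ Ω) (hFx : 0 < F x) :
    ‖iteratedFDerivWithin ℝ m (fun z => F z ^ r) Ω x‖ ≤
      rpowConst r (lowFloor s) * (A ^ ((m : ℝ) / s) * F x ^ (r - m / s)) := by
  have hA := h.bound_nonneg
  have hD := invScale_nonneg (s := s) hA hFx.le
  rw [iteratedFDerivWithin_rpow_eq_taylorComp hΩ.uniqueDiffOn h.contDiffOn r hm hx hFx,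
    rpow_mul_rpow_sub_eq_invScale_pow hA hFx]
  calc _ ≤ Fintype.card (OrderedFinpartition m) *
        (rpowCoeff r (lowFloor s) * F x ^ r * invScale s A (F x) ^ m) :=
        norm_taylorComp_le
          (fun l hl => norm_iteratedFDeriv_rpow_mul_pow_le r (by lia) hFx)
          (fun j hj =>
            (h.norm_iteratedFDerivWithin_le_of_le_mul hs hx hFx le_rfl (one_mul _).ge
              (hj.trans hm)).trans_eq (by rw [one_mul]))
          hD
    _ = Fintype.card (OrderedFinpartition m) * rpowCoeff r (lowFloor s) *
        (F x ^ r * invScale s A (F x) ^ m) := by ring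
    _ ≤ rpowConst r (lowFloor s) * (F x ^ r * invScale s A (F x) ^ m) := by
        gcongr
        exact card_mul_rpowCoeff_le_rpowConst r hm

end Pointwise

section Zeros

lemma rpow_le_of_eq_zero (h : IsFlatWith s A Ω F) (hconv : Convex ℝ Ω) (hΩ : IsOpen Ω)
    (hs : 0 < s) (hx : x ∈ Ω) (hFx : F x = 0) (hy : y ∈ Ω) {p : ℝ} (hp : 0 ≤ p) :
    F y ^ p ≤ 2 ^ (s * p) * A ^ p * ‖y - x‖ ^ (s * p) := by
  have hA := h.bound_nonneg
  refine (Real.rpow_le_rpow (h.nonneg y hy) (h.growth hconv hΩ hs hy hx) hp).trans_eq ?_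
  rw [hFx, zero_add, ← mul_assoc, Real.mul_rpow (by positivity) (by positivity),
    Real.mul_rpow (by positivity) hA, ← Real.rpow_mul zero_le_two, ← Real.rpow_mul (norm_nonneg _)]

/-- Each derivative of `F ^ r` of order `m < r s` vanishes at a zero of `F` to order
`r s - m`, which controls the next one. -/
lemma norm_iteratedFDerivWithin_rpow_sub_le_of_eq_zero (h : IsFlatWith s A Ω F)
    (hconv : Convex ℝ Ω) (hΩ : IsOpen Ω) (hs : 0 < s) {m : ℕ} (hm : m ≤ lowFloor s)
    (hmr : (m : ℝ) < r * s)
    (hzero : ∀ z ∈ Ω, F z = 0 → iteratedFDerivWithin ℝ m (fun z => F z ^ r) Ω z = 0)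
    (hx : x ∈ Ω) (hFx : F x = 0) (hy : y ∈ Ω) :
    ‖iteratedFDerivWithin ℝ m (fun z => F z ^ r) Ω y -
        iteratedFDerivWithin ℝ m (fun z => F z ^ r) Ω x‖ ≤
      rpowConst r (lowFloor s) * 2 ^ (r * s - m) * A ^ r * ‖y - x‖ ^ (r * s - m) := by
  have hA := h.bound_nonneg
  have hC : 0 ≤ rpowConst r (lowFloor s) := zero_le_one.trans (one_le_rpowConst _ _)
  rw [hzero x hx hFx, sub_zero]
  rcases (h.nonneg y hy).eq_or_lt with hFy | hFy
  · rw [hzero y hy hFy.symm, norm_zero]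
    positivity
  · have hp : 0 ≤ r - m / s := by
      rw [sub_nonneg, div_le_iff₀ hs]
      exact hmr.le
    have hsp : s * (r - m / s) = r * s - m := by field_simp
    have hAr : A ^ ((m : ℝ) / s) * A ^ (r - m / s) = A ^ r := by
      rw [← Real.rpow_add_of_nonneg hA (by positivity) hp, add_sub_cancel]
    calc _ ≤ rpowConst r (lowFloor s) * (A ^ ((m : ℝ) / s) * F y ^ (r - m / s)) :=
          h.norm_iteratedFDerivWithin_rpow_le_of_pos hΩ hs r hm hy hFy
      _ ≤ rpowConst r (lowFloor s) * (A ^ ((m : ℝ) / s) *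
          (2 ^ (r * s - m) * A ^ (r - m / s) * ‖y - x‖ ^ (r * s - m))) := by
          gcongr
          exact hsp ▸ h.rpow_le_of_eq_zero hconv hΩ hs hx hFx hy hp
      _ = _ := by rw [← hAr]; ring

lemma iteratedFDerivWithin_rpow_eq_zero (h : IsFlatWith s A Ω F) (hconv : Convex ℝ Ω)
    (hΩ : IsOpen Ω) (hs : 0 < s) {m : ℕ} (hm : m ≤ lowFloor s) (hmr : (m : ℝ) < r * s) :
    ∀ z ∈ Ω, F z = 0 → iteratedFDerivWithin ℝ m (fun z => F z ^ r) Ω z = 0 := by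
  induction m with
  | zero =>
    intro z _ hFz
    have hr : 0 < r := by simpa [hs] using hmr
    rw [← norm_eq_zero, norm_iteratedFDerivWithin_zero, hFz, Real.zero_rpow hr.ne', norm_zero]
  | succ m ih =>
    intro z hz hFz
    have hm' : m ≤ lowFloor s := (Nat.le_succ m).trans hm
    have hmr' : (m : ℝ) + 1 < r * s := by exact_mod_cast hmr
    have hlt : (m : ℝ) < r * s := by linarith
    have hderiv := hasFDerivAt_zero_of_norm_sub_le_rpow (by linarith : 1 < r * s - m)
      (Filter.eventually_of_mem (hΩ.mem_nhds hz) fun w hw =>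
        h.norm_iteratedFDerivWithin_rpow_sub_le_of_eq_zero hconv hΩ hs hm' hlt (ih hm' hlt) hz hFz
          hw)
    rw [← norm_eq_zero, ← norm_fderivWithin_iteratedFDerivWithin, fderivWithin_of_isOpen hΩ hz,
      hderiv.fderiv]
    exact norm_zero (E := E →L[ℝ] E [×m]→L[ℝ] ℝ)

lemma norm_iteratedFDerivWithin_rpow_le_of_eq_zero (h : IsFlatWith s A Ω F) (hconv : Convex ℝ Ω)
    (hΩ : IsOpen Ω) (hs : 0 < s) {m : ℕ} (hm : m ≤ lowFloor s) (hmr : (m : ℝ) = r * s)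
    (hx : x ∈ Ω) (hFx : F x = 0) :
    ‖iteratedFDerivWithin ℝ m (fun z => F z ^ r) Ω x‖ ≤
      2 * rpowConst r (lowFloor s) * A ^ r := by
  have hA := h.bound_nonneg
  have hC := one_le_rpowConst r (lowFloor s)
  cases m with
  | zero =>
    have hr : r = 0 := by simpa [hs.ne'] using hmr.symm
    rw [norm_iteratedFDerivWithin_zero, hr]
    simp only [Real.rpow_zero, norm_one, mul_one]
    linarith [one_le_rpowConst 0 (lowFloor s)]
  | succ m =>
    have hm' : m ≤ lowFloor s := (Nat.le_succ m).trans hm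
    have hmr' : r * s - m = 1 := by
      rw [← hmr, Nat.cast_add_one, add_sub_cancel_left]
    have hlt : (m : ℝ) < r * s := by linarith
    rw [← norm_fderivWithin_iteratedFDerivWithin, fderivWithin_of_isOpen hΩ hx]
    refine norm_fderiv_le_of_lip' ℝ (by positivity)
      (Filter.eventually_of_mem (hΩ.mem_nhds hx) fun w hw => ?_)
    have hsub := h.norm_iteratedFDerivWithin_rpow_sub_le_of_eq_zero hconv hΩ hs hm' hlt
      (h.iteratedFDerivWithin_rpow_eq_zero hconv hΩ hs hm' hlt) hx hFx hw
    rwa [hmr', Real.rpow_one, Real.rpow_one, mul_comm _ (2 : ℝ)] at hsub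

lemma norm_iteratedFDerivWithin_rpow_le (h : IsFlatWith s A Ω F) (hconv : Convex ℝ Ω)
    (hΩ : IsOpen Ω) (hs : 0 < s) {m : ℕ} (hm : m ≤ lowFloor s) (hx : x ∈ Ω)
    (hmr : 0 < F x ∨ (m : ℝ) ≤ r * s) :
    ‖iteratedFDerivWithin ℝ m (fun z => F z ^ r) Ω x‖ ≤
      2 * rpowConst r (lowFloor s) * (A ^ ((m : ℝ) / s) * F x ^ (r - m / s)) := by
  have hA := h.bound_nonneg
  have hFx₀ := h.nonneg x hx
  have hC : 0 ≤ rpowConst r (lowFloor s) := zero_le_one.trans (one_le_rpowConst _ _)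
  rcases hFx₀.eq_or_lt with hFx | hFx
  · rcases (hmr.resolve_left hFx.ge.not_gt).eq_or_lt with heq | hlt
    · have hr : (m : ℝ) / s = r := by rw [heq, mul_div_cancel_right₀ _ hs.ne']
      simpa [hr] using h.norm_iteratedFDerivWithin_rpow_le_of_eq_zero hconv hΩ hs hm heq hx hFx.symm
    · rw [h.iteratedFDerivWithin_rpow_eq_zero hconv hΩ hs hm hlt x hx hFx.symm, norm_zero]
      positivity
  · refine (h.norm_iteratedFDerivWithin_rpow_le_of_pos hΩ hs r hm hx hFx).trans ?_
    gcongr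
    linarith

end Zeros

section Holder

lemma norm_iteratedFDerivWithin_sub_le_of_near (h : IsFlatWith s A Ω F) (hconv : Convex ℝ Ω)
    (hΩ : IsOpen Ω) (hs : 0 < s) (hx : x ∈ Ω) (hy : y ∈ Ω) (hFy : 0 < F y)
    (hnear : A * ‖x - y‖ ^ s ≤ F y) {j : ℕ} (hj : j ≤ lowFloor s) :
    ‖iteratedFDerivWithin ℝ j F Ω x - iteratedFDerivWithin ℝ j F Ω y‖ ≤
      2 ^ (s + 1) * F y * invScale s A (F y) ^ j *
        (invScale s A (F y) * ‖x - y‖) ^ (s - (lowFloor s : ℝ)) := by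
  have hA := h.bound_nonneg
  have hD := invScale_nonneg (s := s) hA hFy.le
  have hK : (1 : ℝ) ≤ 2 ^ (s + 1) := Real.one_le_rpow one_le_two (by linarith)
  have hks := lowFloor_lt hs
  rcases hj.eq_or_lt with rfl | hlt
  · have hscale := rpow_mul_invScale_pow_mul_rpow hs.ne' hA hFy hks.le 1 (norm_nonneg (x - y))
    rw [sub_self, Real.rpow_zero, Real.rpow_one, mul_one] at hscale
    calc _ ≤ A * ‖x - y‖ ^ (s - (lowFloor s : ℝ)) := h.norm_sub_le x hx y hy
      _ ≤ 2 ^ (s + 1) * (A * ‖x - y‖ ^ (s - (lowFloor s : ℝ))) :=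
          le_mul_of_one_le_left (by positivity) hK
      _ = _ := by rw [← hscale]; ring
  · have hseg : segment ℝ y x ⊆ Ω := hconv.segment_subset hy hx
    have hdiff := h.contDiffOn.differentiableOn_iteratedFDerivWithin
      (m := j) (by exact_mod_cast hlt) hΩ.uniqueDiffOn
    have hnext : ∀ z ∈ segment ℝ y x, ‖fderivWithin ℝ (iteratedFDerivWithin ℝ j F Ω) Ω z‖ ≤
        2 ^ (s + 1) * F y * invScale s A (F y) ^ (j + 1) := fun z hz => by
      rw [norm_fderivWithin_iteratedFDerivWithin]
      refine h.norm_iteratedFDerivWithin_le_of_le_mul hs (hseg hz) hFy hK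
        (h.le_two_rpow_mul hconv hΩ hs (hseg hz) hy le_rfl ?_) hlt
      have hzy : ‖z - y‖ ≤ ‖x - y‖ := norm_sub_le_of_mem_segment hz
      exact le_trans (by gcongr) hnear
    calc _ ≤ 2 ^ (s + 1) * F y * invScale s A (F y) ^ (j + 1) * ‖x - y‖ :=
          (convex_segment y x).norm_image_sub_le_of_norm_hasFDerivWithin_le
            (fun z hz => ((hdiff z (hseg hz)).hasFDerivWithinAt).mono hseg) hnext
            (left_mem_segment ℝ y x) (right_mem_segment ℝ y x)
      _ = 2 ^ (s + 1) * F y * invScale s A (F y) ^ j * (invScale s A (F y) * ‖x - y‖) := by ring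
      _ ≤ _ := by
          gcongr
          exact Real.self_le_rpow_of_le_one (by positivity)
            (invScale_mul_le_one hs hA hFy (norm_nonneg _) hnear)
            (by linarith [le_lowFloor_add_one s])

lemma norm_iteratedFDerivWithin_rpow_sub_le_of_near (h : IsFlatWith s A Ω F)
    (hconv : Convex ℝ Ω) (hΩ : IsOpen Ω) (hr : r ≤ 1) (hs : 0 < s) (hx : x ∈ Ω) (hy : y ∈ Ω)
    (hFy : 0 < F y) (hFyx : F y ≤ F x) (hnear : A * ‖x - y‖ ^ s ≤ F y) :
    ‖iteratedFDerivWithin ℝ (lowFloor s) (fun z => F z ^ r) Ω y -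
        iteratedFDerivWithin ℝ (lowFloor s) (fun z => F z ^ r) Ω x‖ ≤
      rpowConst r (lowFloor s) * ((lowFloor s + 1) * (2 ^ (s + 1)) ^ (lowFloor s + 1)) *
        (A * F y ^ (r - 1) * ‖x - y‖ ^ (s - (lowFloor s : ℝ))) := by
  have hA := h.bound_nonneg
  have hD := invScale_nonneg (s := s) hA hFy.le
  set k := lowFloor s
  set K : ℝ := 2 ^ (s + 1)
  set δ : ℝ := (invScale s A (F y) * ‖x - y‖) ^ (s - (k : ℝ))
  have hK : 1 ≤ K := Real.one_le_rpow one_le_two (by linarith)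
  have hδ : 0 ≤ δ := by positivity
  have hFxK : F x ≤ K * F y := h.le_two_rpow_mul hconv hΩ hs hx hy le_rfl hnear
  have hsub : ∀ j ≤ k, ‖iteratedFDerivWithin ℝ j F Ω y - iteratedFDerivWithin ℝ j F Ω x‖ ≤
      K * F y * invScale s A (F y) ^ j * δ := fun j hj =>
    norm_sub_rev (iteratedFDerivWithin ℝ j F Ω x) _ ▸
      h.norm_iteratedFDerivWithin_sub_le_of_near hconv hΩ hs hx hy hFy hnear hj
  have hδF : |F y - F x| ≤ K * F y * δ := by
    simpa [norm_iteratedFDerivWithin_zero_sub] using hsub 0 k.zero_le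
  rw [iteratedFDerivWithin_rpow_eq_taylorComp hΩ.uniqueDiffOn h.contDiffOn r le_rfl hy hFy,
    iteratedFDerivWithin_rpow_eq_taylorComp hΩ.uniqueDiffOn h.contDiffOn r le_rfl hx
      (hFy.trans_le hFyx),
    ← rpow_mul_invScale_pow_mul_rpow hs.ne' hA hFy (lowFloor_lt hs).le r (norm_nonneg (x - y))]
  calc _ ≤ Fintype.card (OrderedFinpartition k) *
        ((k + 1) * (rpowCoeff r k * K ^ (k + 1) * F y ^ r * invScale s A (F y) ^ k * δ)) :=
        norm_taylorComp_sub_le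
          (fun l hl => norm_iteratedFDeriv_rpow_mul_mul_pow_le r (by lia) hFy hK)
          (fun l hl => norm_iteratedFDeriv_rpow_sub_mul_mul_pow_le hr hl hFy hFyx hK hδF)
          (fun j hj => h.norm_iteratedFDerivWithin_le_of_le_mul hs hy hFy hK
            (le_mul_of_one_le_left hFy.le hK) hj)
          (fun j hj => h.norm_iteratedFDerivWithin_le_of_le_mul hs hx hFy hK hFxK hj)
          hsub hD hδ
    _ = Fintype.card (OrderedFinpartition k) * rpowCoeff r k * ((k + 1) * K ^ (k + 1)) *
        (F y ^ r * invScale s A (F y) ^ k * δ) := by ring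
    _ ≤ _ := by
        gcongr
        exact card_mul_rpowCoeff_le_rpowConst r le_rfl

lemma norm_iteratedFDerivWithin_rpow_sub_le_of_far (h : IsFlatWith s A Ω F)
    (hconv : Convex ℝ Ω) (hΩ : IsOpen Ω) (hr : r ≤ 1) (hs : 0 < s) (hx : x ∈ Ω) (hy : y ∈ Ω)
    (hFy : 0 < F y) (hFyx : F y ≤ F x) (hfar : F y ≤ A * ‖x - y‖ ^ s) :
    ‖iteratedFDerivWithin ℝ (lowFloor s) (fun z => F z ^ r) Ω y -
        iteratedFDerivWithin ℝ (lowFloor s) (fun z => F z ^ r) Ω x‖ ≤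
      2 * rpowConst r (lowFloor s) * 2 ^ (s + 1) *
        (A * F y ^ (r - 1) * ‖x - y‖ ^ (s - (lowFloor s : ℝ))) := by
  have hA := h.bound_nonneg
  have hC : 0 ≤ rpowConst r (lowFloor s) := zero_le_one.trans (one_le_rpowConst _ _)
  have hFx : F x ≤ 2 ^ (s + 1) * (A * ‖x - y‖ ^ s) :=
    h.le_two_rpow_mul hconv hΩ hs hx hy hfar le_rfl
  have hpoint : ∀ z ∈ Ω, F y ≤ F z → F z ≤ F x →
      ‖iteratedFDerivWithin ℝ (lowFloor s) (fun z => F z ^ r) Ω z‖ ≤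
        rpowConst r (lowFloor s) * 2 ^ (s + 1) *
          (A * F y ^ (r - 1) * ‖x - y‖ ^ (s - (lowFloor s : ℝ))) := fun z hz hyz hzx => by
    have hFz : 0 < F z := hFy.trans_le hyz
    have hsplit : F z ^ (r - lowFloor s / s) = F z ^ (r - 1) * F z ^ (1 - lowFloor s / s) := by
      rw [← Real.rpow_add hFz, sub_add_sub_cancel]
    calc _ ≤ rpowConst r (lowFloor s) *
          (A ^ ((lowFloor s : ℝ) / s) * F z ^ (r - lowFloor s / s)) :=
          h.norm_iteratedFDerivWithin_rpow_le_of_pos hΩ hs r le_rfl hz hFz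
      _ = rpowConst r (lowFloor s) * (F z ^ (r - 1) *
          (A ^ ((lowFloor s : ℝ) / s) * F z ^ (1 - lowFloor s / s))) := by rw [hsplit]; ring
      _ ≤ rpowConst r (lowFloor s) * (F y ^ (r - 1) *
          (2 ^ (s + 1) * (A * ‖x - y‖ ^ (s - (lowFloor s : ℝ))))) := by
          gcongr rpowConst r (lowFloor s) * (?_ * ?_)
          · exact Real.rpow_le_rpow_of_nonpos hFy hyz (by linarith)
          · exact rpow_mul_rpow_le_of_le_mul hs hA (norm_nonneg _) (lowFloor_lt hs).le
              (Real.one_le_rpow one_le_two (by linarith)) hFz.le (hzx.trans hFx)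
      _ = _ := by ring
  refine (_root_.norm_sub_le _ _).trans ((add_le_add (hpoint y hy le_rfl hFyx)
    (hpoint x hx hFyx le_rfl)).trans_eq ?_)
  ring

lemma norm_iteratedFDerivWithin_rpow_sub_le (h : IsFlatWith s A Ω F)
    (hconv : Convex ℝ Ω) (hΩ : IsOpen Ω) (hr : r ≤ 1) (hs : 0 < s) (hx : x ∈ Ω) (hy : y ∈ Ω)
    (hFy : 0 < F y) (hFyx : F y ≤ F x) :
    ‖iteratedFDerivWithin ℝ (lowFloor s) (fun z => F z ^ r) Ω y -
        iteratedFDerivWithin ℝ (lowFloor s) (fun z => F z ^ r) Ω x‖ ≤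
      holderConst r s * (A * F y ^ (r - 1) * ‖x - y‖ ^ (s - (lowFloor s : ℝ))) := by
  have hA := h.bound_nonneg
  have hC : 0 ≤ rpowConst r (lowFloor s) := zero_le_one.trans (one_le_rpowConst _ _)
  have hK : (1 : ℝ) ≤ 2 ^ (s + 1) := Real.one_le_rpow one_le_two (by linarith)
  unfold holderConst
  rcases le_total (A * ‖x - y‖ ^ s) (F y) with hnear | hfar
  · refine (h.norm_iteratedFDerivWithin_rpow_sub_le_of_near hconv hΩ hr hs hx hy hFy hFyx
      hnear).trans ?_
    gcongr
    linarith
  · refine (h.norm_iteratedFDerivWithin_rpow_sub_le_of_far hconv hΩ hr hs hx hy hFy hFyx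
      hfar).trans ?_
    gcongr
    calc (2 : ℝ) ^ (s + 1) ≤ (2 ^ (s + 1)) ^ (lowFloor s + 1) := le_self_pow₀ hK (by lia)
      _ ≤ _ := le_mul_of_one_le_left (by positivity) (by simp)

end Holder

section LowerBound

variable {ε : ℝ}

lemma norm_iteratedFDerivWithin_rpow_le_of_le (h : IsFlatWith s A Ω F) (hΩ : IsOpen Ω)
    (hr : r ≤ 1) (hs : 0 < s) (hε : 0 < ε) {m : ℕ} (hm : m ≤ lowFloor s) (hx : x ∈ Ω)
    (hεx : ε ≤ F x) (hxA : F x ≤ A) :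
    ‖iteratedFDerivWithin ℝ m (fun z => F z ^ r) Ω x‖ ≤
      rpowConst r (lowFloor s) * (ε ^ (r - 1) * A) := by
  have hFx : 0 < F x := hε.trans_le hεx
  have hA : 0 < A := hFx.trans_le hxA
  have hC : 0 ≤ rpowConst r (lowFloor s) := zero_le_one.trans (one_le_rpowConst _ _)
  have hms : (m : ℝ) / s ≤ 1 := ((div_lt_one hs).2 (cast_lt_of_le_lowFloor hs hm)).le
  calc _ ≤ rpowConst r (lowFloor s) * (A ^ ((m : ℝ) / s) * F x ^ (r - m / s)) :=
        h.norm_iteratedFDerivWithin_rpow_le_of_pos hΩ hs r hm hx hFx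
    _ = rpowConst r (lowFloor s) * (F x ^ (r - 1) * (A ^ ((m : ℝ) / s) * F x ^ (1 - m / s))) := by
        rw [mul_left_comm (F x ^ (r - 1)), ← Real.rpow_add hFx, sub_add_sub_cancel]
    _ ≤ rpowConst r (lowFloor s) * (ε ^ (r - 1) * (A ^ ((m : ℝ) / s) * A ^ (1 - m / s))) := by
        gcongr rpowConst r (lowFloor s) * (?_ * (A ^ ((m : ℝ) / s) * ?_))
        · exact Real.rpow_le_rpow_of_nonpos hε hεx (by linarith)
        · exact Real.rpow_le_rpow hFx.le hxA (by linarith)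
    _ = rpowConst r (lowFloor s) * (ε ^ (r - 1) * A) := by
        rw [← Real.rpow_add hA, add_sub_cancel, Real.rpow_one]

lemma norm_iteratedFDerivWithin_rpow_sub_le_of_le (h : IsFlatWith s A Ω F) (hconv : Convex ℝ Ω)
    (hΩ : IsOpen Ω) (hr : r ≤ 1) (hs : 0 < s) (hε : 0 < ε) (hεF : ∀ z ∈ Ω, ε ≤ F z) (hx : x ∈ Ω)
    (hy : y ∈ Ω) :
    ‖iteratedFDerivWithin ℝ (lowFloor s) (fun z => F z ^ r) Ω x -
        iteratedFDerivWithin ℝ (lowFloor s) (fun z => F z ^ r) Ω y‖ ≤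
      holderConst r s * (A * ε ^ (r - 1) * ‖x - y‖ ^ (s - (lowFloor s : ℝ))) := by
  wlog hyx : F y ≤ F x generalizing x y with hwlog
  · rw [norm_sub_rev, norm_sub_rev x]
    exact hwlog hy hx (le_of_not_ge hyx)
  have hA := h.bound_nonneg
  have hC := holderConst_pos r s
  rw [norm_sub_rev]
  refine (h.norm_iteratedFDerivWithin_rpow_sub_le hconv hΩ hr hs hx hy (hε.trans_le (hεF y hy))
    hyx).trans ?_
  gcongr holderConst r s * (A * ?_ * _)
  exact Real.rpow_le_rpow_of_nonpos hε (hεF y hy) (by linarith)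

lemma norm_iteratedFDerivWithin_rpow_le_of_one_le (h : IsFlatWith s A Ω F) (hΩ : IsOpen Ω)
    (hr : r ≤ 1) (hs : 0 < s) (hε : 0 < ε) {m : ℕ} (hm₁ : 1 ≤ m) (hm : m ≤ lowFloor s)
    (hx : x ∈ Ω) (hεx : ε ≤ F x) :
    ‖iteratedFDerivWithin ℝ m (fun z => F z ^ r) Ω x‖ ≤
      (rpowFlatConst r s * ε ^ (r - 1) * A) ^ ((m : ℝ) / s) * (F x ^ r) ^ (1 - (m : ℝ) / s) := by
  have hA := h.bound_nonneg
  have hFx : 0 < F x := hε.trans_le hεx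
  have hC₁ := one_le_rpowConst r (lowFloor s)
  have hC₁_le := rpowConst_rpow_le_rpowFlatConst r s
  have hC := rpowFlatConst_nonneg r s
  have hroot : rpowConst r (lowFloor s) ≤ (rpowConst r (lowFloor s) ^ s) ^ ((m : ℝ) / s) := by
    rw [← Real.rpow_mul (by positivity), mul_div_cancel₀ _ hs.ne']
    exact Real.self_le_rpow_of_one_le hC₁ (by exact_mod_cast hm₁)
  have hsplit : F x ^ (r - (m : ℝ) / s) =
      (F x ^ (r - 1)) ^ ((m : ℝ) / s) * (F x ^ r) ^ (1 - (m : ℝ) / s) := by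
    rw [← Real.rpow_mul hFx.le, ← Real.rpow_mul hFx.le, ← Real.rpow_add hFx]
    congr 1
    ring
  calc _ ≤ rpowConst r (lowFloor s) * (A ^ ((m : ℝ) / s) * F x ^ (r - m / s)) :=
        h.norm_iteratedFDerivWithin_rpow_le_of_pos hΩ hs r hm hx hFx
    _ = rpowConst r (lowFloor s) * (F x ^ (r - 1)) ^ ((m : ℝ) / s) * A ^ ((m : ℝ) / s) *
        (F x ^ r) ^ (1 - (m : ℝ) / s) := by rw [hsplit]; ring
    _ ≤ rpowFlatConst r s ^ ((m : ℝ) / s) * (ε ^ (r - 1)) ^ ((m : ℝ) / s) * A ^ ((m : ℝ) / s) *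
        (F x ^ r) ^ (1 - (m : ℝ) / s) := by
        gcongr ?_ * ?_ ^ _ * _ * _
        · exact hroot.trans (by gcongr)
        · exact Real.rpow_le_rpow_of_nonpos hε hεx (by linarith)
    _ = _ := by rw [← Real.mul_rpow hC (by positivity), ← Real.mul_rpow (by positivity) hA]

protected lemma rpow (h : IsFlatWith s A Ω F) (hconv : Convex ℝ Ω) (hΩ : IsOpen Ω) (hr : r ≤ 1)
    (hs : 0 < s) (hε : 0 < ε) (hεF : ∀ z ∈ Ω, ε ≤ F z) :
    IsFlatWith s (rpowFlatConst r s * ε ^ (r - 1) * A) Ω (fun z => F z ^ r) := by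
  have hA := h.bound_nonneg
  have hC := rpowFlatConst_nonneg r s
  have hpos : ∀ z ∈ Ω, 0 < F z := fun z hz => hε.trans_le (hεF z hz)
  refine ⟨by positivity, fun z hz => Real.rpow_nonneg (h.nonneg z hz) r,
    h.contDiffOn.rpow_const_of_ne fun z hz => (hpos z hz).ne', fun m hm x hx => ?_,
    fun x hx y hy => ?_⟩
  · rcases m.eq_zero_or_pos with rfl | hm₁
    · simp [abs_of_pos (Real.rpow_pos_of_pos (hpos x hx) r)]
    · exact h.norm_iteratedFDerivWithin_rpow_le_of_one_le hΩ hr hs hε hm₁ hm hx (hεF x hx)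
  · calc _ ≤ holderConst r s * (A * ε ^ (r - 1) * ‖x - y‖ ^ (s - (lowFloor s : ℝ))) :=
          h.norm_iteratedFDerivWithin_rpow_sub_le_of_le hconv hΩ hr hs hε hεF hx hy
      _ ≤ rpowFlatConst r s * (A * ε ^ (r - 1) * ‖x - y‖ ^ (s - (lowFloor s : ℝ))) := by
          gcongr
          exact holderConst_le_rpowFlatConst r s
      _ = _ := by ring

end LowerBound

end IsFlatWith

section Seminorms

variable {s A : ℝ} {Ω : Set E} {F : E → ℝ}

lemma coe_nnnorm_le_ofReal_iff {G : Type*} [SeminormedAddCommGroup G] {v : G} {b : ℝ}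
    (hb : 0 ≤ b) : (‖v‖₊ : ℝ≥0∞) ≤ ENNReal.ofReal b ↔ ‖v‖ ≤ b := by
  rw [← enorm_eq_nnnorm, ← ofReal_norm, ENNReal.ofReal_le_ofReal_iff hb]

lemma derivSup_le_ofReal_iff (hA : 0 ≤ A) :
    derivSup s Ω F ≤ ENNReal.ofReal A ↔
      ∀ m ≤ lowFloor s, ∀ x ∈ Ω, ‖iteratedFDerivWithin ℝ m F Ω x‖ ≤ A := by
  simp only [derivSup, iSup_le_iff, coe_nnnorm_le_ofReal_iff hA]

lemma holderSemi_le_ofReal_iff (hA : 0 ≤ A) :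
    holderSemi s Ω F ≤ ENNReal.ofReal A ↔ ∀ x ∈ Ω, ∀ y ∈ Ω,
      ‖iteratedFDerivWithin ℝ (lowFloor s) F Ω x - iteratedFDerivWithin ℝ (lowFloor s) F Ω y‖ ≤
        A * ‖x - y‖ ^ (s - (lowFloor s : ℝ)) := by
  simp only [holderSemi, iSup_le_iff]
  refine forall₄_congr fun x _ y _ => ?_
  rcases eq_or_ne x y with rfl | hxy
  · simp only [ne_eq, not_true, false_imp_iff, sub_self, norm_zero, true_iff]
    positivity
  · rw [forall_prop_of_true hxy, ENNReal.div_le_iff_le_mul (Or.inr ENNReal.ofReal_ne_top)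
      (Or.inl ENNReal.ofReal_ne_top), ← ENNReal.ofReal_mul hA,
      coe_nnnorm_le_ofReal_iff (by positivity)]

lemma nnnorm_rpow_div_rpow_le_ofReal_iff {G : Type*} [SeminormedAddCommGroup G] {v : G} {f : ℝ}
    {m : ℕ} (hm : m ≠ 0) (hms : (m : ℝ) < s) (hA : 0 ≤ A) (hf : 0 ≤ f) :
    ((‖v‖₊ : ℝ≥0∞) ^ s / ENNReal.ofReal f ^ (s - (m : ℝ))) ^ (1 / (m : ℝ)) ≤ ENNReal.ofReal A ↔
      ‖v‖ ≤ A ^ ((m : ℝ) / s) * f ^ (1 - (m : ℝ) / s) := by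
  have hm₀ : (0 : ℝ) < m := by positivity
  have hs : 0 < s := hm₀.trans hms
  have hsm : 0 < s - m := sub_pos.2 hms
  have hpow : ENNReal.ofReal A ^ (m : ℝ) * ENNReal.ofReal f ^ (s - (m : ℝ)) =
      ENNReal.ofReal (A ^ ((m : ℝ) / s) * f ^ (1 - (m : ℝ) / s)) ^ s := by
    rw [ENNReal.ofReal_rpow_of_nonneg hA hm₀.le, ENNReal.ofReal_rpow_of_nonneg hf hsm.le,
      ← ENNReal.ofReal_mul (by positivity), ENNReal.ofReal_rpow_of_nonneg (by positivity) hs.le,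
      Real.mul_rpow (by positivity) (by positivity), ← Real.rpow_mul hA, ← Real.rpow_mul hf,
      sub_mul, div_mul_cancel₀ _ hs.ne', one_mul]
  have hfA : ENNReal.ofReal A ^ (m : ℝ) ≠ ∞ := ENNReal.rpow_ne_top_of_nonneg hm₀.le ofReal_ne_top
  have hff : ENNReal.ofReal f ^ (s - (m : ℝ)) ≠ ∞ :=
    ENNReal.rpow_ne_top_of_nonneg hsm.le ofReal_ne_top
  rw [one_div, ENNReal.rpow_inv_le_iff hm₀, ENNReal.div_le_iff_le_mul (Or.inr hfA) (Or.inl hff),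
    hpow, ENNReal.rpow_le_rpow_iff hs, coe_nnnorm_le_ofReal_iff (by positivity)]

lemma flatSemi_le_ofReal_iff (hs : 0 < s) (hA : 0 ≤ A) (hF : ∀ x ∈ Ω, 0 ≤ F x) :
    flatSemi s Ω F ≤ ENNReal.ofReal A ↔ ∀ m : ℕ, 1 ≤ m → m ≤ lowFloor s → ∀ x ∈ Ω,
      ‖iteratedFDerivWithin ℝ m F Ω x‖ ≤ A ^ ((m : ℝ) / s) * F x ^ (1 - (m : ℝ) / s) := by
  simp only [flatSemi, iSup_le_iff]
  exact forall₅_congr fun m hm₁ hm x hx => nnnorm_rpow_div_rpow_le_ofReal_iff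
    (Nat.one_le_iff_ne_zero.1 hm₁) (cast_lt_of_le_lowFloor hs hm) hA (hF x hx)

lemma ofReal_le_fsNorm {x : E} (hx : x ∈ Ω) : ENNReal.ofReal (F x) ≤ fsNorm s Ω F :=
  calc ENNReal.ofReal (F x) ≤ (‖iteratedFDerivWithin ℝ 0 F Ω x‖₊ : ℝ≥0∞) := by
        rw [← enorm_eq_nnnorm, ← ofReal_norm, norm_iteratedFDerivWithin_zero]
        exact ENNReal.ofReal_le_ofReal (le_abs_self _)
    _ ≤ derivSup s Ω F := le_iSup₂_of_le 0 (Nat.zero_le _) (le_iSup₂_of_le x hx le_rfl)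
    _ ≤ fsNorm s Ω F := le_self_add.trans le_self_add

lemma holderSemi_add_flatSemi_le_fsNorm : holderSemi s Ω F + flatSemi s Ω F ≤ fsNorm s Ω F :=
  add_le_add_left le_add_self _

lemma iteratedFDerivWithin_rpow_eq_zero_of_eqOn {r : ℝ} (hr : r ≠ 0) (h : ∀ z ∈ Ω, F z = 0)
    (m : ℕ) {x : E} (hx : x ∈ Ω) : iteratedFDerivWithin ℝ m (fun z => F z ^ r) Ω x = 0 := by
  rw [iteratedFDerivWithin_congr (f := fun _ => (0 : ℝ))
    (fun z hz => by simp [h z hz, Real.zero_rpow hr]) hx m]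
  simp

end Seminorms

namespace MemFs

variable {r s : ℝ} {Ω : Set E} {F : E → ℝ}

lemma fsNorm_ne_top (hF : MemFs s Ω F) : fsNorm s Ω F ≠ ∞ :=
  ENNReal.add_ne_top.2 ⟨hF.1.2, hF.2.2⟩

lemma holderSemi_add_flatSemi_ne_top (hF : MemFs s Ω F) :
    holderSemi s Ω F + flatSemi s Ω F ≠ ∞ :=
  ne_top_of_le_ne_top hF.fsNorm_ne_top holderSemi_add_flatSemi_le_fsNorm

lemma isFlatWith (hF : MemFs s Ω F) (hs : 0 < s) {A : ℝ≥0∞} (hA : A ≠ ∞)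
    (h : holderSemi s Ω F + flatSemi s Ω F ≤ A) : IsFlatWith s A.toReal Ω F := by
  have hA₀ := A.toReal_nonneg
  rw [← ENNReal.ofReal_toReal hA] at h
  have hflat := (flatSemi_le_ofReal_iff hs hA₀ hF.2.1).1 (le_add_self.trans h)
  refine ⟨hA₀, hF.2.1, by exact_mod_cast hF.1.1, fun m hm x hx => ?_,
    (holderSemi_le_ofReal_iff hA₀).1 (le_self_add.trans h)⟩
  rcases m.eq_zero_or_pos with rfl | hm₁
  · simp [abs_of_nonneg (hF.2.1 x hx)]
  · exact hflat m hm₁ hm x hx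

lemma isFlatWith_fsNorm (hF : MemFs s Ω F) (hs : 0 < s) :
    IsFlatWith s (fsNorm s Ω F).toReal Ω F :=
  hF.isFlatWith hs hF.fsNorm_ne_top holderSemi_add_flatSemi_le_fsNorm

lemma nnnorm_iteratedFDerivWithin_rpow_le (hF : MemFs s Ω F) (hconv : Convex ℝ Ω)
    (hΩ : IsOpen Ω) (hs : 0 < s) {x : E} (hx : x ∈ Ω) (hr : r ≠ 0 ∨ 0 < F x) {m : ℕ}
    (hm : m ≤ lowFloor s) :
    (‖iteratedFDerivWithin ℝ m (fun z => F z ^ r) Ω x‖₊ : ℝ≥0∞) ≤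
      ENNReal.ofReal (2 * rpowConst r (lowFloor s)) * fsNorm s Ω F ^ ((m : ℝ) / s) *
        ENNReal.ofReal (F x) ^ (r - (m : ℝ) / s) := by
  have hC : 0 < 2 * rpowConst r (lowFloor s) := by linarith [one_le_rpowConst r (lowFloor s)]
  by_cases hmr : 0 < F x ∨ (m : ℝ) ≤ r * s
  · have hN := (fsNorm s Ω F).toReal_nonneg
    have hFx : ENNReal.ofReal (F x ^ (r - (m : ℝ) / s)) =
        ENNReal.ofReal (F x) ^ (r - (m : ℝ) / s) := by
      rcases hmr with hFx | hmr
      · rw [ENNReal.ofReal_rpow_of_pos hFx]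
      · rw [ENNReal.ofReal_rpow_of_nonneg (hF.2.1 x hx) (sub_nonneg.2 ((div_le_iff₀ hs).2 hmr))]
    have hF₀ := hF.2.1 x hx
    refine ((coe_nnnorm_le_ofReal_iff (by positivity)).2 <| (hF.isFlatWith_fsNorm
      hs).norm_iteratedFDerivWithin_rpow_le hconv hΩ hs hm hx hmr).trans_eq ?_
    rw [ENNReal.ofReal_mul hC.le, ENNReal.ofReal_mul (Real.rpow_nonneg hN _), hFx, ← mul_assoc,
      ← ENNReal.ofReal_rpow_of_nonneg hN (by positivity), ENNReal.ofReal_toReal hF.fsNorm_ne_top]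
  push Not at hmr
  have hFx : F x = 0 := le_antisymm hmr.1 (hF.2.1 x hx)
  rcases eq_or_ne (fsNorm s Ω F) 0 with hN | hN
  · have hzero : ∀ z ∈ Ω, F z = 0 := fun z hz => le_antisymm
      (ENNReal.ofReal_eq_zero.1 (le_bot_iff.1 ((ofReal_le_fsNorm hz).trans_eq hN))) (hF.2.1 z hz)
    simp [iteratedFDerivWithin_rpow_eq_zero_of_eqOn (hr.resolve_right hFx.not_gt) hzero m hx]
  · have hneg : r - (m : ℝ) / s < 0 := sub_neg.2 ((lt_div_iff₀ hs).2 hmr.2)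
    have hpow : fsNorm s Ω F ^ ((m : ℝ) / s) ≠ 0 :=
      (ENNReal.rpow_pos hN.bot_lt hF.fsNorm_ne_top).ne'
    rw [hFx, ENNReal.ofReal_zero, ENNReal.zero_rpow_of_neg hneg,
      ENNReal.mul_top (mul_ne_zero (ENNReal.ofReal_pos.2 hC).ne' hpow)]
    exact le_top

lemma nnnorm_iteratedFDerivWithin_rpow_sub_le (hF : MemFs s Ω F) (hconv : Convex ℝ Ω)
    (hΩ : IsOpen Ω) (hr₁ : r < 1) (hs : 0 < s) (hr : r ≠ 0 ∨ ∀ z ∈ Ω, 0 < F z) {x y : E}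
    (hx : x ∈ Ω) (hy : y ∈ Ω) :
    (‖iteratedFDerivWithin ℝ (lowFloor s) (fun z => F z ^ r) Ω x -
        iteratedFDerivWithin ℝ (lowFloor s) (fun z => F z ^ r) Ω y‖₊ : ℝ≥0∞) ≤
      ENNReal.ofReal (holderConst r s) * (holderSemi s Ω F + flatSemi s Ω F) /
        min (ENNReal.ofReal (F x) ^ (1 - r)) (ENNReal.ofReal (F y) ^ (1 - r)) *
        ENNReal.ofReal (‖x - y‖ ^ (s - (lowFloor s : ℝ))) := by
  wlog hyx : F y ≤ F x generalizing x y with hwlog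
  · rw [min_comm, norm_sub_rev x, ← nnnorm_neg, neg_sub]
    exact hwlog hy hx (le_of_not_ge hyx)
  rw [min_eq_right (ENNReal.rpow_le_rpow (ENNReal.ofReal_le_ofReal hyx) (by linarith))]
  have hC := holderConst_pos r s
  have hA := hF.holderSemi_add_flatSemi_ne_top
  have hflat := hF.isFlatWith hs hA le_rfl
  set A := holderSemi s Ω F + flatSemi s Ω F
  rcases (hF.2.1 y hy).eq_or_lt' with hFy | hFy
  · rcases eq_or_ne x y with rfl | hxy
    · simp
    rcases eq_or_ne A 0 with hA₀ | hA₀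
    · rw [hA₀, ENNReal.toReal_zero] at hflat
      have hzero : ∀ z ∈ Ω, F z = 0 := fun z hz => hflat.eq_zero hconv hΩ hs hz hy hFy
      have hr₀ : r ≠ 0 := hr.resolve_right fun hpos => (hpos y hy).ne' hFy
      simp [iteratedFDerivWithin_rpow_eq_zero_of_eqOn hr₀ hzero, hx, hy]
    · have hdist : 0 < ‖x - y‖ ^ (s - (lowFloor s : ℝ)) :=
        Real.rpow_pos_of_pos (norm_pos_iff.2 (sub_ne_zero.2 hxy)) _
      rw [hFy, ENNReal.ofReal_zero, ENNReal.zero_rpow_of_pos (by linarith),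
        ENNReal.div_zero (mul_ne_zero (ENNReal.ofReal_pos.2 hC).ne' hA₀),
        ENNReal.top_mul (ENNReal.ofReal_pos.2 hdist).ne']
      exact le_top
  · have hA' := A.toReal_nonneg
    have hinv : ENNReal.ofReal (F y ^ (r - 1)) = (ENNReal.ofReal (F y) ^ (1 - r))⁻¹ := by
      rw [← ENNReal.rpow_neg, neg_sub, ENNReal.ofReal_rpow_of_pos hFy]
    rw [← nnnorm_neg, neg_sub]
    refine ((coe_nnnorm_le_ofReal_iff (by positivity)).2 <|
      hflat.norm_iteratedFDerivWithin_rpow_sub_le hconv hΩ hr₁.le hs hx hy hFy hyx).trans_eq ?_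
    rw [ENNReal.ofReal_mul hC.le, ENNReal.ofReal_mul (by positivity), ENNReal.ofReal_mul hA',
      ENNReal.ofReal_toReal hA, hinv, div_eq_mul_inv, ← mul_assoc, ← mul_assoc]

lemma fsNorm_rpow_le (hF : MemFs s Ω F) (hconv : Convex ℝ Ω) (hΩ : IsOpen Ω) (hr : r ≤ 1)
    (hs : 0 < s) {ε : ℝ} (hε : 0 < ε) (hεF : ∀ x ∈ Ω, ε ≤ F x) :
    fsNorm s Ω (fun z => F z ^ r) ≤
      ENNReal.ofReal (3 * rpowFlatConst r s * ε ^ (r - 1)) * fsNorm s Ω F := by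
  have hN := hF.fsNorm_ne_top
  have hflat := hF.isFlatWith_fsNorm hs
  have hflat_rpow := hflat.rpow hconv hΩ hr hs hε hεF
  set B := rpowFlatConst r s * ε ^ (r - 1) * (fsNorm s Ω F).toReal
  have hB := hflat_rpow.bound_nonneg
  have hderiv : derivSup s Ω (fun z => F z ^ r) ≤ ENNReal.ofReal B := by
    refine (derivSup_le_ofReal_iff hB).2 fun m hm x hx => ?_
    have hFN := (ENNReal.ofReal_le_iff_le_toReal hN).1 (ofReal_le_fsNorm hx)
    calc _ ≤ rpowConst r (lowFloor s) * (ε ^ (r - 1) * (fsNorm s Ω F).toReal) :=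
          hflat.norm_iteratedFDerivWithin_rpow_le_of_le hΩ hr hs hε hm hx (hεF x hx) hFN
      _ ≤ rpowFlatConst r s * (ε ^ (r - 1) * (fsNorm s Ω F).toReal) := by
          gcongr
          exact rpowConst_le_rpowFlatConst r hs
      _ = B := (mul_assoc _ _ _).symm
  have hholder : holderSemi s Ω (fun z => F z ^ r) ≤ ENNReal.ofReal B :=
    (holderSemi_le_ofReal_iff hB).2 hflat_rpow.norm_sub_le
  have hflatSemi : flatSemi s Ω (fun z => F z ^ r) ≤ ENNReal.ofReal B :=
    (flatSemi_le_ofReal_iff hs hB hflat_rpow.nonneg).2 fun m _ hm => hflat_rpow.norm_le m hm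
  have hC := rpowFlatConst_nonneg r s
  calc fsNorm s Ω (fun z => F z ^ r)
      ≤ ENNReal.ofReal B + ENNReal.ofReal B + ENNReal.ofReal B :=
        add_le_add (add_le_add hderiv hholder) hflatSemi
    _ = ENNReal.ofReal (3 * rpowFlatConst r s * ε ^ (r - 1) * (fsNorm s Ω F).toReal) := by
        rw [← ENNReal.ofReal_add hB hB, ← ENNReal.ofReal_add (by positivity) hB]
        congr 1
        ring
    _ = _ := by rw [ENNReal.ofReal_mul (by positivity), ENNReal.ofReal_toReal hN]

end MemFs

theorem statement19_general {r s : ℝ} (hr₁ : r < 1) (hs : 0 < s) :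
    ∃ C : ℝ, 0 < C ∧
      ∀ (V : Type*) [NormedAddCommGroup V] [NormedSpace ℝ V] (Ω : Set V), Convex ℝ Ω → IsOpen Ω →
      ∀ F : V → ℝ, MemFs s Ω F → (0 < r ∨ ∀ x ∈ Ω, 0 < F x) →
        (∀ x ∈ Ω, ∀ m ≤ lowFloor s,
          (‖iteratedFDerivWithin ℝ m (fun z => F z ^ r) Ω x‖₊ : ℝ≥0∞) ≤
            ENNReal.ofReal C * fsNorm s Ω F ^ ((m : ℝ) / s)
              * ENNReal.ofReal (F x) ^ (r - (m : ℝ) / s)) ∧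
        (∀ x ∈ Ω, ∀ y ∈ Ω,
          (‖iteratedFDerivWithin ℝ (lowFloor s) (fun z => F z ^ r) Ω x
              - iteratedFDerivWithin ℝ (lowFloor s) (fun z => F z ^ r) Ω y‖₊ :
                ℝ≥0∞) ≤
            ENNReal.ofReal C * (holderSemi s Ω F + flatSemi s Ω F)
              / min (ENNReal.ofReal (F x) ^ (1 - r))
                    (ENNReal.ofReal (F y) ^ (1 - r))
              * ENNReal.ofReal (‖x - y‖ ^ (s - (lowFloor s : ℝ)))) ∧
        (∀ ε : ℝ, 0 < ε → (∀ x ∈ Ω, ε ≤ F x) →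
          fsNorm s Ω (fun z => F z ^ r) ≤
            ENNReal.ofReal (C * ε ^ (r - 1)) * fsNorm s Ω F) := by
  have hholder_pos := holderConst_pos r s
  have hrpow_le := two_mul_rpowConst_le_holderConst r hs
  have hholder_le := holderConst_le_rpowFlatConst r s
  refine ⟨3 * rpowFlatConst r s, by linarith, fun V _ _ Ω hconv hΩ F hF hr =>
    ⟨fun x hx m hm => ?_, fun x hx y hy => ?_, fun ε hε hεF =>
      hF.fsNorm_rpow_le hconv hΩ hr₁.le hs hε hεF⟩⟩
  · refine (hF.nnnorm_iteratedFDerivWithin_rpow_le hconv hΩ hs hx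
      (hr.imp ne_of_gt fun hpos => hpos x hx) hm).trans ?_
    gcongr ENNReal.ofReal ?_ * _ * _
    linarith
  · refine (hF.nnnorm_iteratedFDerivWithin_rpow_sub_le hconv hΩ hr₁ hs (hr.imp_left ne_of_gt)
      hx hy).trans ?_
    gcongr
    linarith

/-- Lemma `key-flat`: for `r ∈ (0,1)`, `s > 0`, convex open
`Ω ⊆ ℝⁿ`, there is `C = C(n,r,s)` such that for every `F ∈ F^s(Ω)`:
(i) `|∇^m(F^r)(x)| ≤ C ‖F‖_{F^s}^{m/s} F(x)^{r−m/s}` for `0 ≤ m < s`;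
(ii) `|∇^{⌊s⌋}(F^r)(x) − ∇^{⌊s⌋}(F^r)(y)| ≤
  C (‖F‖_{Ċ^s} + ‖F‖_{Ḟ^s}) / min{F(x)^{1−r}, F(y)^{1−r}} · |x−y|^{s−⌊s⌋}`;
(iii) if `F ≥ ε > 0` on `Ω`, then `‖F^r‖_{F^s(Ω)} ≤ C ε^{r−1} ‖F‖_{F^s(Ω)}`.
The quantities are taken in `ℝ≥0∞`, realizing the conventions `0/0 = 0`,
`a/0 = ∞`. -/
theorem statement19 (n : ℕ) (hn : 1 ≤ n) (r s : ℝ) (hr0 : 0 < r) (hr1 : r < 1)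
    (hs : 0 < s) :
    ∃ C : ℝ, 0 < C ∧
      ∀ (Ω : Set (EuclideanSpace ℝ (Fin n))), Convex ℝ Ω → IsOpen Ω →
      ∀ F : EuclideanSpace ℝ (Fin n) → ℝ, MemFs s Ω F →
        (∀ x ∈ Ω, ∀ m ≤ lowFloor s,
          (‖iteratedFDerivWithin ℝ m (fun z => F z ^ r) Ω x‖₊ : ℝ≥0∞) ≤
            ENNReal.ofReal C * fsNorm s Ω F ^ ((m : ℝ) / s)
              * ENNReal.ofReal (F x) ^ (r - (m : ℝ) / s)) ∧
        (∀ x ∈ Ω, ∀ y ∈ Ω,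
          (‖iteratedFDerivWithin ℝ (lowFloor s) (fun z => F z ^ r) Ω x
              - iteratedFDerivWithin ℝ (lowFloor s) (fun z => F z ^ r) Ω y‖₊ :
                ℝ≥0∞) ≤
            ENNReal.ofReal C * (holderSemi s Ω F + flatSemi s Ω F)
              / min (ENNReal.ofReal (F x) ^ (1 - r))
                    (ENNReal.ofReal (F y) ^ (1 - r))
              * ENNReal.ofReal (‖x - y‖ ^ (s - (lowFloor s : ℝ)))) ∧
        (∀ ε : ℝ, 0 < ε → (∀ x ∈ Ω, ε ≤ F x) →
          fsNorm s Ω (fun z => F z ^ r) ≤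
            ENNReal.ofReal (C * ε ^ (r - 1)) * fsNorm s Ω F) := by
  obtain ⟨C, hC, h⟩ := statement19_general hr1 hs
  exact ⟨C, hC, fun Ω hconv hopen F hF => h _ Ω hconv hopen F hF (Or.inl hr0)⟩

end
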